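/- arXiv:1712.08255 — 5 statements merged into one kernel-verified Lean document; each statement's English description precedes it below -/
import Mathlib

section
/- There exists an absolute constant D ∈ [1,∞) with the following property: for every Banach space X, every constant C ≥ 1, and every locally finite metric space A all of whose finite subsets admit C-bilipschitz embeddings into X, the space A admits a (D·C)-bilipschitz embedding into X. -/
/-- A metric space is locally finite if every closed ball of finite radius is finite. -/
def MetricLocallyFinite (A : Type*) [MetricSpace A] : Prop :=
  ∀ (x : A) (R : ℝ), (Metric.closedBall x R).Finite

/-- `f` is a `C`-bilipschitz embedding: there is `r > 0` with
`r * d(u,v) ≤ d(f u, f v) ≤ r * C * d(u,v)` for all `u, v`. -/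
def IsBilipschitzEmbedding {A Y : Type*} [MetricSpace A] [MetricSpace Y]
    (C : ℝ) (f : A → Y) : Prop :=
  ∃ r : ℝ, 0 < r ∧ ∀ u v : A,
    r * dist u v ≤ dist (f u) (f v) ∧ dist (f u) (f v) ≤ r * C * dist u v

universe u v

theorem afd_key {X : Type*} [NormedAddCommGroup X] [NormedSpace ℝ X] (U : Ultrafilter ℕ)
    (x : ℕ → X) (d s : ℝ) (hs0 : 0 ≤ s) (hs1 : s ≤ 1)
    (hx : ∀ᶠ n in (U : Filter ℕ), d ≤ ‖x n‖) :
    ∀ᶠ n in (U : Filter ℕ), ∀ᶠ m in (U : Filter ℕ), d / 5 ≤ ‖(1 - s) • x n + s • x m‖ := by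
  by_contra hcon
  have h1 : ∀ᶠ n in (U : Filter ℕ), ∀ᶠ m in (U : Filter ℕ),
      ‖(1 - s) • x n + s • x m‖ < d / 5 := by
    rw [← Ultrafilter.eventually_not] at hcon
    filter_upwards [hcon] with n hn
    rw [← Ultrafilter.eventually_not] at hn
    filter_upwards [hn] with m hm
    exact not_le.mp hm
  obtain ⟨n0, hn0⟩ := h1.exists
  obtain ⟨n, hn, hn0n⟩ := (h1.and hn0).exists
  obtain ⟨m, ⟨⟨hm, hn0m⟩, hnm⟩, hxm⟩ := (((h1.and hn0).and hn).and hx).exists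
  obtain ⟨p, hnp, hmp⟩ := (hn.and hm).exists
  have e1 : (1 - s) * ‖x n - x m‖ < 2 * (d / 5) := by
    have : (1 - s) * ‖x n - x m‖ =
        ‖((1 - s) • x n + s • x p) - ((1 - s) • x m + s • x p)‖ := by
      rw [← Real.norm_of_nonneg (by linarith : 0 ≤ 1 - s), ← norm_smul]
      congr 1
      rw [Real.norm_of_nonneg (by linarith : 0 ≤ 1 - s)]
      module
    rw [this]
    have := norm_sub_le ((1 - s) • x n + s • x p) ((1 - s) • x m + s • x p)
    linarith
  have e2 : s * ‖x n - x m‖ < 2 * (d / 5) := by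
    have : s * ‖x n - x m‖ =
        ‖((1 - s) • x n0 + s • x n) - ((1 - s) • x n0 + s • x m)‖ := by
      rw [← Real.norm_of_nonneg hs0, ← norm_smul]
      congr 1
      rw [Real.norm_of_nonneg hs0]
      module
    rw [this]
    have := norm_sub_le ((1 - s) • x n0 + s • x n) ((1 - s) • x n0 + s • x m)
    linarith
  have e4 : ‖x m‖ ≤ ‖(1 - s) • x n + s • x m‖ + (1 - s) * ‖x n - x m‖ := by
    have : x m = ((1 - s) • x n + s • x m) - (1 - s) • (x n - x m) := by module
    calc ‖x m‖ = ‖((1 - s) • x n + s • x m) - (1 - s) • (x n - x m)‖ := by rw [← this]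
      _ ≤ _ := norm_sub_le _ _
      _ = _ := by rw [norm_smul, Real.norm_of_nonneg (by linarith : 0 ≤ 1 - s)]
  have e5 : (1 - s) * ‖x n - x m‖ ≤ ‖x n - x m‖ := by
    have := norm_nonneg (x n - x m); nlinarith
  linarith

noncomputable def afdInterp {X : Type*} [NormedAddCommGroup X] [NormedSpace ℝ X]
    (p : ℕ → X) (t : ℝ) : X :=
  (1 - Int.fract t) • p ⌊t⌋₊ + Int.fract t • p (⌊t⌋₊ + 1)

theorem afd_fract (t : ℝ) (h : 0 ≤ t) : Int.fract t = t - (⌊t⌋₊ : ℝ) := by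
  rw [Int.fract, natCast_floor_eq_intCast_floor h]

theorem afd_steps {X : Type*} [NormedAddCommGroup X] (p : ℕ → X) (L : ℝ)
    (hp : ∀ k, ‖p (k + 1) - p k‖ ≤ L) (j i : ℕ) : ‖p (j + i) - p j‖ ≤ L * i := by
  induction i with
  | zero => simp
  | succ i ih =>
    have h := norm_add_le (p (j + i + 1) - p (j + i)) (p (j + i) - p j)
    rw [sub_add_sub_cancel] at h
    have := hp (j + i)
    push_cast
    rw [← add_assoc]
    linarith

theorem afd_interp_lip {X : Type*} [NormedAddCommGroup X] [NormedSpace ℝ X]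
    (p : ℕ → X) (L : ℝ) (hp : ∀ k, ‖p (k + 1) - p k‖ ≤ L) (s t : ℝ) (hs : 0 ≤ s) (hst : s ≤ t) :
    ‖afdInterp p t - afdInterp p s‖ ≤ L * (t - s) := by
  have ht : 0 ≤ t := hs.trans hst
  have fs := afd_fract s hs
  have ft := afd_fract t ht
  have s0 := Int.fract_nonneg s
  have s1 := (Int.fract_lt_one s).le
  have t0 := Int.fract_nonneg t
  have t1 := (Int.fract_lt_one t).le
  have hfl : ⌊s⌋₊ ≤ ⌊t⌋₊ := Nat.floor_mono hst
  unfold afdInterp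
  generalize Int.fract s = a at *
  generalize Int.fract t = b at *
  generalize ⌊s⌋₊ = j at *
  generalize ⌊t⌋₊ = k at *
  rcases hfl.eq_or_lt with h | h
  · subst h
    have : (1 - b) • p j + b • p (j + 1) - ((1 - a) • p j + a • p (j + 1))
      = (b - a) • (p (j + 1) - p j) := by module
    rw [this, norm_smul, Real.norm_of_nonneg (by linarith)]
    have := hp j
    have h2 : b - a = t - s := by linarith
    rw [h2, mul_comm]
    exact mul_le_mul_of_nonneg_right this (by linarith)
  · obtain ⟨i, rfl⟩ := Nat.exists_eq_add_of_lt h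
    have h3 := afd_steps p L hp (j + 1) i
    rw [show j + 1 + i = j + i + 1 by ring] at h3
    have : (1 - b) • p (j + i + 1) + b • p (j + i + 1 + 1) - ((1 - a) • p j + a • p (j + 1))
      = b • (p (j + i + 1 + 1) - p (j + i + 1)) + (p (j + i + 1) - p (j + 1))
        + (1 - a) • (p (j + 1) - p j) := by module
    rw [this]
    refine (norm_add₃_le).trans ?_
    rw [norm_smul, norm_smul, Real.norm_of_nonneg t0,
      Real.norm_of_nonneg (by linarith : 0 ≤ 1 - a)]
    have h4 := mul_le_mul_of_nonneg_left (hp (j + i + 1)) t0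
    have h5 := mul_le_mul_of_nonneg_left (hp j) (by linarith : 0 ≤ 1 - a)
    have h6 : t - s = b + i + (1 - a) := by push_cast at ft; linarith
    rw [h6]
    linarith

theorem afd_select (U : Ultrafilter ℕ) (P : ℕ → ℕ → ℕ → Prop)
    (h : ∀ k, ∀ᶠ n in (U : Filter ℕ), ∀ᶠ m in (U : Filter ℕ), P k n m) :
    ∃ N : ℕ → ℕ, ∀ k, P k (N k) (N (k + 1)) := by
  have h0 := (h 0).exists
  have step : ∀ k, ∀ n : {n // ∀ᶠ m in (U : Filter ℕ), P k n m},
      ∃ m : {n // ∀ᶠ m in (U : Filter ℕ), P (k + 1) n m}, P k n m := by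
    rintro k ⟨n, hn⟩
    obtain ⟨m, hm1, hm2⟩ := (hn.and (h (k + 1))).exists
    exact ⟨⟨m, hm2⟩, hm1⟩
  choose g hg using step
  let N : (k : ℕ) → {n // ∀ᶠ m in (U : Filter ℕ), P k n m} :=
    fun k => Nat.rec ⟨h0.choose, h0.choose_spec⟩ (fun k n => g k n) k
  exact ⟨fun k => (N k).1, fun k => hg k (N k)⟩

theorem afd_maps {X : Type*} [NormedAddCommGroup X] [NormedSpace ℝ X]
    {A : Type*} [MetricSpace A] (C : ℝ) (hC : 1 ≤ C) (hA : MetricLocallyFinite A)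
    (h : ∀ S : Set A, S.Finite → ∃ f : S → X, IsBilipschitzEmbedding C f) (o : A) (n : ℕ) :
    ∃ f : A → X, (∀ a, ‖f a‖ ≤ C * dist a o) ∧
      ∀ u v, dist u o ≤ n → dist v o ≤ n →
        dist u v ≤ ‖f u - f v‖ ∧ ‖f u - f v‖ ≤ C * dist u v := by
  classical
  obtain ⟨f, r, hr, hf⟩ := h (Metric.closedBall o n) (hA o n)
  have ho : o ∈ Metric.closedBall o (n : ℝ) := by simp
  let g : A → X := fun a => if ha : a ∈ Metric.closedBall o (n : ℝ) then
    r⁻¹ • (f ⟨a, ha⟩ - f ⟨o, ho⟩) else 0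
  have key : ∀ u v, dist u o ≤ n → dist v o ≤ n →
        dist u v ≤ ‖g u - g v‖ ∧ ‖g u - g v‖ ≤ C * dist u v := by
    intro u v hu hv
    have hu' : u ∈ Metric.closedBall o (n : ℝ) := hu
    have hv' : v ∈ Metric.closedBall o (n : ℝ) := hv
    have e : g u - g v = r⁻¹ • (f ⟨u, hu'⟩ - f ⟨v, hv'⟩) := by
      simp only [g, dif_pos hu', dif_pos hv']
      module
    obtain ⟨h1, h2⟩ := hf ⟨u, hu'⟩ ⟨v, hv'⟩
    rw [e, norm_smul, Real.norm_of_nonneg (inv_nonneg.2 hr.le), ← dist_eq_norm]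
    change r * dist u v ≤ _ at h1
    change _ ≤ r * C * dist u v at h2
    constructor
    · rwa [le_inv_mul_iff₀ hr]
    · rwa [inv_mul_le_iff₀ hr, ← mul_assoc]
  refine ⟨g, fun a => ?_, key⟩
  by_cases ha : dist a o ≤ n
  · have := (key a o ha (by simp)).2
    have hgo : g o = 0 := by simp [g]
    rwa [hgo, sub_zero] at this
  · have : g a = 0 := dif_neg ha
    rw [this, norm_zero]
    positivity

theorem afd_log (κ a b : ℝ) (hκ : 0 ≤ κ) (ha : 0 ≤ a) (hab : a ≤ b) :
    a * (κ * Real.log (1 + b) - κ * Real.log (1 + a)) ≤ κ * (b - a) := by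
  have h1 : Real.log (1 + b) - Real.log (1 + a) ≤ (b - a) / (1 + a) := by
    rw [← Real.log_div (by linarith) (by linarith)]
    refine (Real.log_le_sub_one_of_pos (by apply div_pos <;> linarith)).trans (le_of_eq ?_)
    field_simp
    ring
  have h2 : a * (Real.log (1 + b) - Real.log (1 + a)) ≤ b - a := by
    refine (mul_le_mul_of_nonneg_left h1 ha).trans ?_
    rw [← mul_div_assoc, div_le_iff₀ (by linarith)]
    nlinarith
  have := mul_le_mul_of_nonneg_left h2 hκ
  linarith

theorem afd_main {X : Type*} [NormedAddCommGroup X] [NormedSpace ℝ X]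
    {A : Type*} [MetricSpace A] (C : ℝ) (hC : 1 ≤ C) (hA : MetricLocallyFinite A)
    (h : ∀ S : Set A, S.Finite → ∃ f : S → X, IsBilipschitzEmbedding C f) (o : A) :
    ∃ f : A → X, IsBilipschitzEmbedding (20 * C) f := by
  choose f hf0 hf using fun n => afd_maps C hC hA h o n
  let U : Ultrafilter ℕ := Filter.hyperfilter ℕ
  have hU : (U : Filter ℕ) ≤ Filter.atTop := Nat.hyperfilter_le_atTop
  have hCpos : 0 < C := by linarith
  set κ : ℝ := 1 / (20 * C) with hκ
  have hκ0 : 0 < κ := by positivity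
  let t : A → ℝ := fun a => κ * Real.log (1 + dist a o)
  have ht0 : ∀ a, 0 ≤ t a := fun a =>
    mul_nonneg hκ0.le (Real.log_nonneg (by have := dist_nonneg (x := a) (y := o); linarith))
  let R : ℕ → ℝ := fun k => Real.exp ((k + 1) / κ)
  have htR : ∀ (k : ℕ) a, t a ≤ k + 1 → dist a o ≤ R k := by
    intro k a ha
    have h1 : Real.log (1 + dist a o) ≤ (k + 1) / κ := by
      rw [le_div_iff₀ hκ0, mul_comm]; exact ha
    have h2 := (Real.log_le_iff_le_exp (by positivity)).1 h1
    change _ ≤ Real.exp _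
    linarith
  let P : ℕ → ℕ → ℕ → Prop := fun k n m => ∀ u ∈ Metric.closedBall o (R k),
    ∀ v ∈ Metric.closedBall o (R k),
      (dist u v / 5 ≤ ‖(1 - Int.fract (t v)) • (f n v - f n u)
        + Int.fract (t v) • (f m v - f m u)‖) ∧
      ‖f n v - f n u‖ ≤ C * dist u v ∧ ‖f m v - f m u‖ ≤ C * dist u v
  have hP : ∀ k, ∀ᶠ n in (U : Filter ℕ), ∀ᶠ m in (U : Filter ℕ), P k n m := by
    intro k
    have hB : ∀ᶠ n : ℕ in (U : Filter ℕ), R k ≤ n :=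
      hU (tendsto_natCast_atTop_atTop.eventually_ge_atTop (R k))
    have hfin := hA o (R k)
    have hlow : ∀ᶠ n in (U : Filter ℕ), ∀ u ∈ Metric.closedBall o (R k),
        ∀ v ∈ Metric.closedBall o (R k), ∀ᶠ m in (U : Filter ℕ),
        (dist u v / 5 ≤ ‖(1 - Int.fract (t v)) • (f n v - f n u)
        + Int.fract (t v) • (f m v - f m u)‖) := by
      rw [Filter.eventually_all_finite hfin]
      intro u hu
      rw [Filter.eventually_all_finite hfin]
      intro v hv
      apply afd_key U (fun n => f n v - f n u) _ _ (Int.fract_nonneg _) (Int.fract_lt_one _).le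
      filter_upwards [hB] with n hn
      rw [dist_comm]
      exact (hf n v u (le_trans hv hn) (le_trans hu hn)).1
    filter_upwards [hlow, hB] with n hn hBn
    have hn' : ∀ᶠ m in (U : Filter ℕ), ∀ u ∈ Metric.closedBall o (R k),
        ∀ v ∈ Metric.closedBall o (R k),
        (dist u v / 5 ≤ ‖(1 - Int.fract (t v)) • (f n v - f n u)
        + Int.fract (t v) • (f m v - f m u)‖) := by
      rw [Filter.eventually_all_finite hfin]
      intro u hu
      rw [Filter.eventually_all_finite hfin]
      intro v hv
      exact hn u hu v hv
    filter_upwards [hn', hB] with m hm hBm u hu v hv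
    refine ⟨hm u hu v hv, ?_, ?_⟩
    · rw [dist_comm]; exact (hf n v u (le_trans hv hBn) (le_trans hu hBn)).2
    · rw [dist_comm]; exact (hf m v u (le_trans hv hBm) (le_trans hu hBm)).2
  obtain ⟨N, hN⟩ := afd_select U P hP
  let φ : A → X := fun a => afdInterp (fun k => f (N k) a) (t a)
  have main : ∀ u v, dist u o ≤ dist v o →
      dist u v / 10 ≤ ‖φ v - φ u‖ ∧ ‖φ v - φ u‖ ≤ 2 * C * dist u v := by
    intro u v huv
    have htt : t u ≤ t v := by
      apply mul_le_mul_of_nonneg_left _ hκ0.le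
      apply Real.log_le_log
      · positivity
      · linarith
    have herr := afd_interp_lip (fun k => f (N k) u) (2 * (C * dist u o)) (fun k => by
      have := norm_sub_le (f (N (k + 1)) u) (f (N k) u)
      have h1 := hf0 (N (k + 1)) u
      have h2 := hf0 (N k) u
      linarith) (t u) (t v) (ht0 u) htt
    have hlog := afd_log κ (dist u o) (dist v o) hκ0.le dist_nonneg huv
    have hdd : dist v o - dist u o ≤ dist u v := by
      have := dist_triangle v u o; rw [dist_comm v u] at this; linarith
    have herr2 : 2 * (C * dist u o) * (t v - t u) ≤ dist u v / 10 := by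
      have h1 : dist u o * (t v - t u) ≤ κ * dist u v :=
        hlog.trans (mul_le_mul_of_nonneg_left hdd hκ0.le)
      have h2 := mul_le_mul_of_nonneg_left h1 (by linarith : 0 ≤ 2 * C)
      have h3 : 2 * C * (κ * dist u v) = dist u v / 10 := by
        rw [hκ]; field_simp; ring
      linarith
    set k := ⌊t v⌋₊ with hk
    have hv1 : t v ≤ k + 1 := (Nat.lt_floor_add_one (t v)).le
    obtain ⟨p1, p2, p3⟩ := hN k u (htR k u (htt.trans hv1)) v (htR k v hv1)
    have s0 := Int.fract_nonneg (t v)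
    have s1 := (Int.fract_lt_one (t v)).le
    have hdec : φ v - φ u = ((1 - Int.fract (t v)) • (f (N k) v - f (N k) u)
        + Int.fract (t v) • (f (N (k + 1)) v - f (N (k + 1)) u))
        + (afdInterp (fun k => f (N k) u) (t v) - afdInterp (fun k => f (N k) u) (t u)) := by
      have e1 : φ v = (1 - Int.fract (t v)) • f (N k) v
        + Int.fract (t v) • f (N (k + 1)) v := rfl
      have e2 : afdInterp (fun k => f (N k) u) (t v) = (1 - Int.fract (t v)) • f (N k) u
        + Int.fract (t v) • f (N (k + 1)) u := rfl
      have e3 : φ u = afdInterp (fun k => f (N k) u) (t u) := rfl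
      rw [e1, e2, e3]
      module
    have hup : ‖(1 - Int.fract (t v)) • (f (N k) v - f (N k) u)
        + Int.fract (t v) • (f (N (k + 1)) v - f (N (k + 1)) u)‖ ≤ C * dist u v := by
      refine (norm_add_le _ _).trans ?_
      rw [norm_smul, norm_smul, Real.norm_of_nonneg s0,
        Real.norm_of_nonneg (by linarith : 0 ≤ 1 - Int.fract (t v))]
      have h4 := mul_le_mul_of_nonneg_left p3 s0
      have h5 := mul_le_mul_of_nonneg_left p2 (by linarith : 0 ≤ 1 - Int.fract (t v))
      linarith
    have hd := dist_nonneg (x := u) (y := v)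
    have hCd : dist u v ≤ C * dist u v := by nlinarith
    rw [hdec]
    constructor
    · have := norm_sub_le_norm_add ((1 - Int.fract (t v)) • (f (N k) v - f (N k) u)
        + Int.fract (t v) • (f (N (k + 1)) v - f (N (k + 1)) u))
        (afdInterp (fun k => f (N k) u) (t v) - afdInterp (fun k => f (N k) u) (t u))
      linarith
    · refine (norm_add_le _ _).trans ?_
      linarith
  refine ⟨φ, 1 / 10, by norm_num, fun u v => ?_⟩
  rcases le_total (dist u o) (dist v o) with huv | huv
  · obtain ⟨h1, h2⟩ := main u v huv
    rw [dist_comm (φ u), dist_eq_norm (φ v)]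
    constructor <;> linarith
  · obtain ⟨h1, h2⟩ := main v u huv
    rw [dist_eq_norm (φ u), dist_comm u v]
    constructor <;> linarith

theorem absolute_constant_finite_determination :
    ∃ D : ℝ, 1 ≤ D ∧
      ∀ (X : Type u) [NormedAddCommGroup X] [NormedSpace ℝ X] [CompleteSpace X]
        (A : Type v) [MetricSpace A] (C : ℝ), 1 ≤ C → MetricLocallyFinite A →
        (∀ S : Set A, S.Finite → ∃ f : S → X, IsBilipschitzEmbedding C f) →
        ∃ f : A → X, IsBilipschitzEmbedding (D * C) f := by
  refine ⟨20, by norm_num, ?_⟩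
  intro X _ _ _ A _ C hC hA h
  rcases isEmpty_or_nonempty A with hE | ⟨⟨o⟩⟩
  · exact ⟨fun a => hE.elim a, 1, one_pos, fun a => hE.elim a⟩
  · exact afd_main C hC hA h o
end

section
/- Let 1 ≤ p < ∞ and let {X_n}_{n=1}^∞ be a nested family of finite-dimensional Banach spaces (X_n is a proper linear subspace of X_{n+1}, with the induced norm, for every n). Let X = (⊕_{n=1}^∞ X_n)_p be their ℓ_p-sum. Then for every ε > 0 and every C ≥ 1, if A is a locally finite metric space all of whose finite subsets admit C-bilipschitz embeddings into X, then A admits a ((1+ε)·C)-bilipschitz embedding into X. -/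
open scoped ENNReal

noncomputable section

namespace LpSumAux

lemma exists_K (X : ℕ → Type*) [∀ n, NormedAddCommGroup (X n)] [∀ n, NormedSpace ℝ (X n)]
    (hnested : ∀ n, ∃ J : X n →ₗᵢ[ℝ] X (n + 1), ¬ Function.Surjective J)
    (k m : ℕ) (h : k ≤ m) : Nonempty (X k →ₗᵢ[ℝ] X m) := by
  induction m, h using Nat.le_induction with
  | base => exact ⟨LinearIsometry.id⟩
  | succ m _ ih =>
    obtain ⟨J, _⟩ := hnested m
    obtain ⟨K⟩ := ih
    exact ⟨J.comp K⟩

lemma exists_T (p : ℝ≥0∞) [Fact (1 ≤ p)] (hp : p ≠ ∞)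
    (X : ℕ → Type*) [∀ n, NormedAddCommGroup (X n)] [∀ n, NormedSpace ℝ (X n)]
    (hnested : ∀ n, ∃ J : X n →ₗᵢ[ℝ] X (n + 1), ¬ Function.Surjective J) :
    ∃ T : ℕ → lp X p →ₗ[ℝ] lp X p, ∀ (n : ℕ) (x : ℕ → lp X p),
      ‖∑ i ∈ Finset.range n, T i (x i)‖ ^ p.toReal
        = ∑ i ∈ Finset.range n, ‖x i‖ ^ p.toReal := by
  have hq : 0 < p.toReal :=
    ENNReal.toReal_pos (by have := Fact.out (p := 1 ≤ p); positivity) hp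
  have K : ∀ m : ℕ, X (Nat.unpair m).2 →ₗᵢ[ℝ] X m := fun m =>
    Classical.choice (exists_K X hnested _ _ (Nat.unpair_right_le m))
  let t : ℕ → (∀ k, X k) → (∀ m, X m) := fun i x m =>
    if (Nat.unpair m).1 = i then K m (x (Nat.unpair m).2) else 0
  have hsum : ∀ i (x : lp X p), HasSum (fun m => ‖t i x m‖ ^ p.toReal) (‖x‖ ^ p.toReal) := by
    intro i x
    have hinj : Function.Injective (fun k => Nat.pair i k) := by
      intro a b hab
      have := Nat.pair_eq_pair.1 hab
      exact this.2
    rw [← hinj.hasSum_iff]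
    · convert lp.hasSum_norm hq x using 2 with k
      have h1 : ‖t i x (Nat.pair i k)‖ = ‖x (Nat.unpair (Nat.pair i k)).2‖ := by
        simp only [t]
        rw [if_pos (by simp)]
        exact (K _).norm_map _
      have h2 := congrArg (fun a => ‖x a‖) (show (Nat.unpair (Nat.pair i k)).2 = k by simp)
      simp only [Function.comp]
      rw [h1, h2]
    · intro m hm
      have : (Nat.unpair m).1 ≠ i := by
        rintro rfl
        exact hm ⟨(Nat.unpair m).2, Nat.pair_unpair m⟩
      simp [t, this, hq.ne']
  have hmem : ∀ i (x : lp X p), Memℓp (t i x) p := fun i x =>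
    (memℓp_gen_iff hq).2 (hsum i x).summable
  let T : ℕ → lp X p →ₗ[ℝ] lp X p := fun i =>
    { toFun := fun x => ⟨t i x, hmem i x⟩
      map_add' := by
        intro x y
        ext m
        show t i _ m = t i x m + t i y m
        simp only [t]
        split_ifs <;> simp
      map_smul' := by
        intro c x
        ext m
        show t i _ m = c • t i x m
        simp only [t]
        split_ifs <;> simp }
  refine ⟨T, fun n x => ?_⟩
  have h1 := lp.hasSum_norm hq (∑ i ∈ Finset.range n, T i (x i))
  have h2 := hasSum_sum (s := Finset.range n) (fun i _ => hsum i (x i))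
  refine h1.unique ?_
  convert h2 using 2 with m
  have hco : (∑ i ∈ Finset.range n, T i (x i) : lp X p) m
      = ∑ i ∈ Finset.range n, t i (x i) m := by
    rw [lp.coeFn_sum, Finset.sum_apply]
    rfl
  rw [hco]
  have hz : ∀ i, i ≠ (Nat.unpair m).1 → t i (x i) m = 0 := fun i hi => by
    simp only [t]
    rw [if_neg (Ne.symm hi)]
  by_cases hm : (Nat.unpair m).1 ∈ Finset.range n
  · rw [Finset.sum_eq_single_of_mem _ hm (fun i _ hi => hz i hi),
      Finset.sum_eq_single_of_mem _ hm (fun i _ hi => by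
        rw [hz i hi, norm_zero, Real.zero_rpow hq.ne'])]
  · have hz' : ∀ i ∈ Finset.range n, t i (x i) m = 0 := fun i hi =>
      hz i (fun h => hm (h ▸ hi))
    rw [Finset.sum_eq_zero hz', Finset.sum_eq_zero (fun i hi => by
        rw [hz' i hi, norm_zero, Real.zero_rpow hq.ne']), norm_zero, Real.zero_rpow hq.ne']

/-- tent functions -/
def tent (i : ℕ) (t : ℝ) : ℝ := max 0 (1 - |t - i|)

/-- clamp -/
def clamp (t : ℝ) : ℝ := max 0 (min t 1)

lemma clamp_mono : Monotone clamp := fun a b h => by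
  unfold clamp; gcongr

lemma tent_eq (i : ℕ) (t : ℝ) : tent i t = clamp (t + 1 - i) - clamp (t - i) := by
  unfold tent clamp
  rcases abs_cases (t - i) with h | h <;> rcases max_cases 0 (1 - |t - i|) with h1 | h1 <;>
  rcases min_cases (t - i) 1 with h2 | h2 <;> rcases min_cases (t + 1 - i) 1 with h3 | h3 <;>
  rcases max_cases 0 (min (t - i) 1) with h4 | h4 <;>
  rcases max_cases 0 (min (t + 1 - i) 1) with h5 | h5 <;> linarith

lemma clamp_sum (t : ℝ) (ht : 0 ≤ t) (n : ℕ) :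
    ∑ i ∈ Finset.range n, clamp (t - i) = min t n := by
  induction n with
  | zero => simp [ht]
  | succ n ih =>
    rw [Finset.sum_range_succ, ih]
    unfold clamp
    push_cast
    rcases min_cases t (n:ℝ) with h | h <;> rcases min_cases t ((n:ℝ)+1) with h1 | h1 <;>
    rcases min_cases (t - n) 1 with h2 | h2 <;>
    rcases max_cases 0 (min (t - n) 1) with h4 | h4 <;> linarith

lemma tent_nonneg (i : ℕ) (t : ℝ) : 0 ≤ tent i t := le_max_left _ _

lemma tent_sum_le (t : ℝ) (ht : 0 ≤ t) (n : ℕ) : ∑ i ∈ Finset.range n, tent i t ≤ 1 := by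
  simp only [tent_eq, Finset.sum_sub_distrib]
  rw [clamp_sum t ht, clamp_sum (t+1) (by linarith)]
  rcases min_cases t (n:ℝ) with h | h <;> rcases min_cases (t+1) (n:ℝ) with h1 | h1 <;> linarith

lemma tent_lip (s t : ℝ) (hs : 0 ≤ s) (ht : 0 ≤ t) (n : ℕ) :
    ∑ i ∈ Finset.range n, |tent i t - tent i s| ≤ 2 * |t - s| := by
  wlog hst : s ≤ t generalizing s t
  · have := this t s ht hs (by linarith)
    rw [abs_sub_comm t s]
    simpa only [abs_sub_comm] using this
  calc ∑ i ∈ Finset.range n, |tent i t - tent i s|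
      ≤ ∑ i ∈ Finset.range n, ((clamp (t + 1 - i) - clamp (s + 1 - i))
          + (clamp (t - i) - clamp (s - i))) := by
        refine Finset.sum_le_sum fun i _ => ?_
        rw [tent_eq, tent_eq, abs_le]
        have h1 := clamp_mono (show s + 1 - (i:ℝ) ≤ t + 1 - i by linarith)
        have h2 := clamp_mono (show s - (i:ℝ) ≤ t - i by linarith)
        constructor <;> linarith
    _ ≤ 2 * |t - s| := by
        simp only [Finset.sum_add_distrib, Finset.sum_sub_distrib]
        rw [clamp_sum t ht, clamp_sum (t+1) (by linarith), clamp_sum s hs,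
          clamp_sum (s+1) (by linarith), abs_of_nonneg (by linarith)]
        rcases min_cases t (n:ℝ) with h | h <;> rcases min_cases (t+1) (n:ℝ) with h1 | h1 <;>
        rcases min_cases s (n:ℝ) with h2 | h2 <;> rcases min_cases (s+1) (n:ℝ) with h3 | h3 <;>
        linarith

lemma tent_zero (i : ℕ) (t : ℝ) (h : 1 ≤ |t - i|) : tent i t = 0 := by
  unfold tent; exact max_eq_left (by linarith)

lemma exists_tau (p : ℝ≥0∞) [Fact (1 ≤ p)] (hp : p ≠ ∞) :
    ∃ τ : ℕ → ℝ → ℝ, (∀ (i : ℕ) (t : ℝ), (i:ℝ) + 1 ≤ t → τ i t = 0) ∧ (∀ (i : ℕ) (t : ℝ), t + 1 ≤ i → τ i t = 0) ∧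
      (∀ t : ℝ, 0 ≤ t → ∀ n : ℕ, t + 1 ≤ n → ∑ i ∈ Finset.range n, |τ i t| ^ p.toReal = 1) ∧
      (∀ s t : ℝ, 0 ≤ s → 0 ≤ t → ∀ n : ℕ,
        ∑ i ∈ Finset.range n, |τ i t - τ i s| ≤ 12 * |t - s|) := by
  have hq : 0 < p.toReal :=
    ENNReal.toReal_pos (by have := Fact.out (p := 1 ≤ p); positivity) hp
  let V : ℕ → ℝ → lp (fun _ : ℕ => ℝ) p := fun n t =>
    ∑ i ∈ Finset.range n, lp.single p i (tent i t)
  let N : ℝ → ℝ := fun t => ‖V (⌊t⌋₊ + 2) t‖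
  have hle : ∀ t : ℝ, 0 ≤ t → t + 1 ≤ ((⌊t⌋₊ + 2 : ℕ) : ℝ) := fun t ht => by
    have := Nat.lt_floor_add_one t
    push_cast; linarith
  have hVV : ∀ t : ℝ, ∀ n m : ℕ, t + 1 ≤ n → n ≤ m → V n t = V m t := by
    intro t n m hn hm
    refine Finset.sum_subset (Finset.range_mono hm) ?_
    intro i _ hi
    have hi' : (n:ℝ) ≤ i := by
      have := Finset.mem_range.not.1 hi
      exact_mod_cast not_lt.1 this
    rw [tent_zero i t (by rw [abs_sub_comm]; exact le_trans (by linarith) (le_abs_self _))]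
    simp
  have hVN : ∀ t : ℝ, 0 ≤ t → ∀ n : ℕ, t + 1 ≤ n → ‖V n t‖ = N t := by
    intro t ht n hn
    rcases le_total n (⌊t⌋₊ + 2) with h | h
    · rw [hVV t n _ hn h]
    · rw [← hVV t _ n (hle t ht) h]
  have hnorm : ∀ n t, ‖V n t‖ ^ p.toReal = ∑ i ∈ Finset.range n, |tent i t| ^ p.toReal := by
    intro n t
    exact lp.norm_sum_single hq (fun i => tent i t) (Finset.range n)
  have hNlow : ∀ t : ℝ, 0 ≤ t → 1 / 2 ≤ N t := by
    intro t ht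
    set j := ⌊t + 1/2⌋₊
    have h1 : (j:ℝ) ≤ t + 1/2 := Nat.floor_le (by linarith)
    have h2 := Nat.lt_floor_add_one (t + 1/2)
    have h3 : 1/2 ≤ tent j t := by
      unfold tent
      refine le_trans ?_ (le_max_right _ _)
      have : |t - j| ≤ 1/2 := abs_le.2 ⟨by linarith, by linarith⟩
      linarith
    have hj : j ∈ Finset.range (⌊t⌋₊ + 2) := by
      rw [Finset.mem_range]
      have := hle t ht
      have h4 : (j:ℝ) < ((⌊t⌋₊ + 2 : ℕ) : ℝ) := by linarith
      exact_mod_cast h4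
    refine h3.trans ?_
    have h5 : |tent j t| ^ p.toReal ≤ (N t) ^ p.toReal := by
      rw [hnorm]
      exact Finset.single_le_sum (f := fun i => |tent i t| ^ p.toReal)
        (fun i _ => by positivity) hj
    exact (le_abs_self _).trans
      ((Real.rpow_le_rpow_iff (abs_nonneg _) (norm_nonneg _) hq).1 h5)
  have hNlip : ∀ s t : ℝ, 0 ≤ s → 0 ≤ t → |N t - N s| ≤ 2 * |t - s| := by
    intro s t hs ht
    obtain ⟨n, hn⟩ := exists_nat_ge (max (s + 1) (t + 1))
    rw [← hVN t ht n ((le_max_right _ _).trans hn), ← hVN s hs n ((le_max_left _ _).trans hn)]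
    refine (abs_norm_sub_norm_le _ _).trans ?_
    refine le_trans ?_ (tent_lip s t hs ht n)
    simp only [V]
    rw [← Finset.sum_sub_distrib]
    refine (norm_sum_le _ _).trans (Finset.sum_le_sum fun i _ => ?_)
    rw [← lp.single_sub, lp.norm_single (ENNReal.toReal_pos_iff.1 hq).1]
    rfl
  refine ⟨fun i t => tent i t / N t, ?_, ?_, ?_, ?_⟩
  · intro i t h
    simp [tent_zero i t (le_trans (by linarith) (le_abs_self _))]
  · intro i t h
    simp [tent_zero i t (by rw [abs_sub_comm]; exact le_trans (by linarith) (le_abs_self _))]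
  · intro t ht n hn
    have hN := hNlow t ht
    have hN0 : 0 < N t := by linarith
    simp only [abs_div]
    simp_rw [Real.div_rpow (abs_nonneg _) (abs_nonneg _)]
    rw [← Finset.sum_div, ← hnorm, hVN t ht n hn, abs_of_pos hN0]
    exact div_self (Real.rpow_pos_of_pos hN0 _).ne'
  · intro s t hs ht n
    have hNs := hNlow s hs
    have hNt := hNlow t ht
    have hl := hNlip s t hs ht
    have key : ∀ i, |tent i t / N t - tent i s / N s|
        ≤ 2 * |tent i t - tent i s| + tent i s * (8 * |t - s|) := by
      intro i
      have e : tent i t / N t - tent i s / N s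
          = (tent i t - tent i s) / N t + tent i s * ((N s - N t) / (N t * N s)) := by
        have : N t ≠ 0 := by linarith
        have : N s ≠ 0 := by linarith
        field_simp
        ring
      rw [e]
      refine (abs_add_le _ _).trans (add_le_add ?_ ?_)
      · rw [abs_div, abs_of_pos (show 0 < N t by linarith), div_le_iff₀ (by linarith)]
        nlinarith [abs_nonneg (tent i t - tent i s)]
      · rw [abs_mul, abs_of_nonneg (tent_nonneg i s)]
        refine mul_le_mul_of_nonneg_left ?_ (tent_nonneg i s)
        have h4 : 1/4 ≤ N t * N s := by nlinarith
        rw [abs_div, abs_of_pos (show 0 < N t * N s by linarith), div_le_iff₀ (by linarith),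
          abs_sub_comm]
        nlinarith [abs_nonneg (t - s)]
    refine (Finset.sum_le_sum fun i _ => key i).trans ?_
    rw [Finset.sum_add_distrib, ← Finset.mul_sum, ← Finset.sum_mul]
    have h1 := tent_lip s t hs ht n
    have h2 := tent_sum_le s hs n
    nlinarith [abs_nonneg (t - s)]

lemma log_lip (a b : ℝ) (hb : 0 ≤ b) (hab : b ≤ a) :
    (Real.log (1 + a) - Real.log (1 + b)) * b ≤ a - b := by
  have h1 : Real.log (1 + a) - Real.log (1 + b) ≤ (a - b) / (1 + b) := by
    rw [← Real.log_div (by linarith) (by linarith)]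
    refine (Real.log_le_sub_one_of_pos (by apply div_pos <;> linarith)).trans (le_of_eq ?_)
    have : 1 + b ≠ 0 := by linarith
    field_simp
    ring
  have h2 : (a - b) / (1 + b) * b ≤ a - b := by
    rw [div_mul_eq_mul_div, div_le_iff₀ (by linarith)]
    nlinarith
  exact (mul_le_mul_of_nonneg_right h1 hb).trans h2

lemma glue {A E : Type*} [MetricSpace A] [NormedAddCommGroup E] [NormedSpace ℝ E]
    (q C δ : ℝ) (hq : 0 < q) (hC : 1 ≤ C) (hδ : 0 < δ)
    (T : ℕ → E →ₗ[ℝ] E)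
    (hT : ∀ (n : ℕ) (x : ℕ → E),
      ‖∑ i ∈ Finset.range n, T i (x i)‖ ^ q = ∑ i ∈ Finset.range n, ‖x i‖ ^ q)
    (τ : ℕ → ℝ → ℝ) (h1 : ∀ (i : ℕ) (t : ℝ), (i:ℝ) + 1 ≤ t → τ i t = 0)
    (h2 : ∀ (i : ℕ) (t : ℝ), t + 1 ≤ i → τ i t = 0)
    (h3 : ∀ t : ℝ, 0 ≤ t → ∀ n : ℕ, t + 1 ≤ n → ∑ i ∈ Finset.range n, |τ i t| ^ q = 1)
    (h4 : ∀ s t : ℝ, 0 ≤ s → 0 ≤ t → ∀ n : ℕ,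
        ∑ i ∈ Finset.range n, |τ i t - τ i s| ≤ 12 * |t - s|)
    (O : A) (F : ℕ → A → E) (hF0 : ∀ i y, ‖F i y‖ ≤ C * dist y O)
    (hF : ∀ (i : ℕ) (x y : A), δ * Real.log (1 + dist x O) ≤ i + 1 → δ * Real.log (1 + dist y O) ≤ i + 1 →
      dist x y ≤ ‖F i x - F i y‖ ∧ ‖F i x - F i y‖ ≤ C * dist x y) :
    ∃ g : A → E, ∀ x y, (1 - 12 * C * δ) * dist x y ≤ dist (g x) (g y) ∧
      dist (g x) (g y) ≤ C * (1 + 12 * δ) * dist x y := by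
  have hTn : ∀ i x, ‖T i x‖ = ‖x‖ := by
    intro i x
    have h := hT (i + 1) (fun j => if j = i then x else 0)
    rw [Finset.sum_eq_single i (by intro j _ hj; simp [hj]) (by simp),
      Finset.sum_eq_single i (by intro j _ hj; simp [hj, hq.ne']) (by simp)] at h
    simp only [if_true] at h
    exact (Real.rpow_left_inj (norm_nonneg _) (norm_nonneg _) hq.ne').1 h
  let t : A → ℝ := fun x => δ * Real.log (1 + dist x O)
  have ht : ∀ x, 0 ≤ t x := fun x =>
    mul_nonneg hδ.le (Real.log_nonneg (by linarith [dist_nonneg (x := x) (y := O)]))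
  let g' : ℕ → A → E := fun n x => ∑ i ∈ Finset.range n, T i (τ i (t x) • F i x)
  let g : A → E := fun x => g' (⌊t x⌋₊ + 2) x
  have hVV : ∀ x, ∀ n m : ℕ, t x + 1 ≤ n → n ≤ m → g' n x = g' m x := by
    intro x n m hn hm
    refine Finset.sum_subset (Finset.range_mono hm) ?_
    intro i _ hi
    have hi' : (n:ℝ) ≤ i := by
      have := Finset.mem_range.not.1 hi
      exact_mod_cast not_lt.1 this
    rw [h2 i (t x) (by linarith)]
    simp
  have hg : ∀ x, ∀ n : ℕ, t x + 1 ≤ n → g x = g' n x := by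
    intro x n hn
    have hle : t x + 1 ≤ ((⌊t x⌋₊ + 2 : ℕ) : ℝ) := by
      have := Nat.lt_floor_add_one (t x)
      push_cast; linarith
    rcases le_total n (⌊t x⌋₊ + 2) with h | h
    · exact (hVV x n _ hn h).symm
    · exact hVV x _ n hle h
  refine ⟨g, ?_⟩
  intro x y
  wlog hxy : dist y O ≤ dist x O generalizing x y
  · have := this y x (by linarith)
    rwa [dist_comm y x, dist_comm (g y)] at this
  have hty : t y ≤ t x := by
    refine mul_le_mul_of_nonneg_left (Real.log_le_log ?_ ?_) hδ.le
    · linarith [dist_nonneg (x := y) (y := O)]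
    · linarith
  obtain ⟨n, hn⟩ := exists_nat_ge (t x + 1)
  rw [hg x n hn, hg y n (by linarith), dist_eq_norm]
  set D := ∑ i ∈ Finset.range n, T i (τ i (t x) • (F i x - F i y)) with hD
  have hDq : ‖D‖ ^ q = ∑ i ∈ Finset.range n, |τ i (t x)| ^ q * ‖F i x - F i y‖ ^ q := by
    rw [hD, hT]
    refine Finset.sum_congr rfl fun i _ => ?_
    rw [norm_smul, Real.mul_rpow (norm_nonneg _) (norm_nonneg _), Real.norm_eq_abs]
  have hd : 0 ≤ dist x y := dist_nonneg
  have hin : ∀ i, τ i (t x) ≠ 0 →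
      dist x y ≤ ‖F i x - F i y‖ ∧ ‖F i x - F i y‖ ≤ C * dist x y := by
    intro i hi
    have : t x ≤ i + 1 := by
      by_contra hc
      exact hi (h1 i _ (by linarith))
    exact hF i x y this (hty.trans this)
  have hone := h3 (t x) (ht x) n hn
  have hDlow : dist x y ≤ ‖D‖ := by
    rw [← Real.rpow_le_rpow_iff hd (norm_nonneg _) hq, hDq]
    calc dist x y ^ q = ∑ i ∈ Finset.range n, |τ i (t x)| ^ q * dist x y ^ q := by
          rw [← Finset.sum_mul, hone, one_mul]
      _ ≤ _ := by
          refine Finset.sum_le_sum fun i _ => ?_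
          by_cases hi : τ i (t x) = 0
          · simp [hi, Real.zero_rpow hq.ne']
          · exact mul_le_mul_of_nonneg_left
              (Real.rpow_le_rpow hd (hin i hi).1 hq.le) (by positivity)
  have hDup : ‖D‖ ≤ C * dist x y := by
    rw [← Real.rpow_le_rpow_iff (norm_nonneg _) (by positivity) hq, hDq]
    calc _ ≤ ∑ i ∈ Finset.range n, |τ i (t x)| ^ q * (C * dist x y) ^ q := by
          refine Finset.sum_le_sum fun i _ => ?_
          by_cases hi : τ i (t x) = 0
          · simp [hi, Real.zero_rpow hq.ne']
          · exact mul_le_mul_of_nonneg_left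
              (Real.rpow_le_rpow (norm_nonneg _) (hin i hi).2 hq.le) (by positivity)
      _ = _ := by
          rw [← Finset.sum_mul, hone, one_mul]
  have hdiff : g' n x - g' n y - D
      = ∑ i ∈ Finset.range n, (τ i (t x) - τ i (t y)) • T i (F i y) := by
    simp only [g', hD]
    rw [← Finset.sum_sub_distrib, ← Finset.sum_sub_distrib]
    refine Finset.sum_congr rfl fun i _ => ?_
    simp only [map_smul, map_sub, smul_sub, sub_smul]
    abel
  have herr : ‖g' n x - g' n y - D‖ ≤ 12 * C * δ * dist x y := by
    rw [hdiff]
    calc _ ≤ ∑ i ∈ Finset.range n, |τ i (t x) - τ i (t y)| * (C * dist y O) := by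
          refine (norm_sum_le _ _).trans (Finset.sum_le_sum fun i _ => ?_)
          rw [norm_smul, hTn, Real.norm_eq_abs]
          exact mul_le_mul_of_nonneg_left (hF0 i y) (abs_nonneg _)
      _ ≤ 12 * |t x - t y| * (C * dist y O) := by
          rw [← Finset.sum_mul]
          exact mul_le_mul_of_nonneg_right (h4 _ _ (ht y) (ht x) n) (by positivity)
      _ = 12 * C * δ * ((Real.log (1 + dist x O) - Real.log (1 + dist y O)) * dist y O) := by
          rw [abs_of_nonneg (by linarith)]
          simp only [t]
          ring
      _ ≤ 12 * C * δ * dist x y := by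
          refine mul_le_mul_of_nonneg_left ?_ (by positivity)
          refine (log_lip _ _ dist_nonneg hxy).trans ?_
          linarith [dist_triangle x y O]
  have e : g' n x - g' n y = (g' n x - g' n y - D) + D := by abel
  have e2 : D = (g' n x - g' n y) - (g' n x - g' n y - D) := by abel
  have u1 : ‖g' n x - g' n y‖ ≤ ‖g' n x - g' n y - D‖ + ‖D‖ := by
    conv_lhs => rw [e]
    exact norm_add_le _ _
  have u2 : ‖D‖ ≤ ‖g' n x - g' n y‖ + ‖g' n x - g' n y - D‖ := by
    conv_lhs => rw [e2]
    exact norm_sub_le _ _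
  constructor <;> nlinarith

end LpSumAux

end

theorem lp_sum_of_nested_finite_dimensional_finite_determination
    (p : ℝ≥0∞) [Fact (1 ≤ p)] (hp : p ≠ ∞)
    (X : ℕ → Type*) [∀ n, NormedAddCommGroup (X n)] [∀ n, NormedSpace ℝ (X n)]
    [∀ n, FiniteDimensional ℝ (X n)]
    (hnested : ∀ n, ∃ J : X n →ₗᵢ[ℝ] X (n + 1), ¬ Function.Surjective J)
    (ε C : ℝ) (hε : 0 < ε) (hC : 1 ≤ C)
    (A : Type*) [MetricSpace A] (hA : MetricLocallyFinite A)
    (hfin : ∀ S : Set A, S.Finite → ∃ f : S → lp X p, IsBilipschitzEmbedding C f) :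
    ∃ f : A → lp X p, IsBilipschitzEmbedding ((1 + ε) * C) f := by
  have hq : 0 < p.toReal :=
    ENNReal.toReal_pos (by have := Fact.out (p := 1 ≤ p); positivity) hp
  rcases isEmpty_or_nonempty A with hAe | ⟨⟨O⟩⟩
  · exact ⟨fun a => (hAe.false a).elim, 1, one_pos, fun a => (hAe.false a).elim⟩
  obtain ⟨T, hT⟩ := LpSumAux.exists_T p hp X hnested
  obtain ⟨τ, h1, h2, h3, h4⟩ := LpSumAux.exists_tau p hp
  set η : ℝ := ε / (1 + C * (1 + ε)) with hη
  have hpos : 0 < 1 + C * (1 + ε) := by positivity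
  have hη0 : 0 < η := div_pos hε hpos
  have hηe : η * (1 + C * (1 + ε)) = ε := div_mul_cancel₀ _ hpos.ne'
  set δ : ℝ := η / 12 with hδ
  have hδ0 : 0 < δ := by positivity
  have hF : ∀ i : ℕ, ∃ F : A → lp X p, (∀ y, ‖F y‖ ≤ C * dist y O) ∧
      ∀ x y, δ * Real.log (1 + dist x O) ≤ i + 1 → δ * Real.log (1 + dist y O) ≤ i + 1 →
      dist x y ≤ ‖F x - F y‖ ∧ ‖F x - F y‖ ≤ C * dist x y := by
    intro i
    classical
    set S := Metric.closedBall O (Real.exp ((i + 1) / δ)) with hS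
    obtain ⟨f, r, hr, hf⟩ := hfin S (hA _ _)
    have hO : O ∈ S := Metric.mem_closedBall_self (Real.exp_pos _).le
    let F : A → lp X p := fun x => if h : x ∈ S then r⁻¹ • (f ⟨x, h⟩ - f ⟨O, hO⟩) else 0
    have hFO : F O = 0 := by simp [F, hO]
    have hFF : ∀ x y, x ∈ S → y ∈ S →
        dist x y ≤ ‖F x - F y‖ ∧ ‖F x - F y‖ ≤ C * dist x y := by
      intro x y hx hy
      have e : F x - F y = r⁻¹ • (f ⟨x, hx⟩ - f ⟨y, hy⟩) := by
        simp only [F, dif_pos hx, dif_pos hy, ← smul_sub]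
        congr 1
        abel
      have h := hf ⟨x, hx⟩ ⟨y, hy⟩
      rw [dist_eq_norm (f _), Subtype.dist_eq] at h
      rw [e, norm_smul, Real.norm_eq_abs, abs_of_pos (inv_pos.2 hr), inv_mul_eq_div,
        le_div_iff₀ hr, div_le_iff₀ hr]
      constructor
      · linarith [h.1]
      · linarith [h.2]
    have hmem : ∀ x, δ * Real.log (1 + dist x O) ≤ i + 1 → x ∈ S := by
      intro x hx
      have hd : 0 ≤ dist x O := dist_nonneg
      rw [hS, Metric.mem_closedBall]
      have : Real.log (1 + dist x O) ≤ (i + 1) / δ := by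
        rw [le_div_iff₀ hδ0]; linarith
      have := (Real.log_le_iff_le_exp (by linarith)).1 this
      linarith
    refine ⟨F, ?_, fun x y hx hy => hFF x y (hmem x hx) (hmem y hy)⟩
    intro y
    by_cases hy : y ∈ S
    · have := (hFF y O hy hO).2
      rwa [hFO, sub_zero] at this
    · simp only [F, dif_neg hy, norm_zero]
      positivity
  choose F hF0 hF1 using hF
  obtain ⟨g, hg⟩ := LpSumAux.glue p.toReal C δ hq hC hδ0 T hT τ h1 h2 h3 h4 O F hF0 hF1
  have e1 : 12 * C * δ = C * η := by rw [hδ]; ring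
  have e2 : 12 * δ = η := by rw [hδ]; ring
  have hr : 0 < 1 - C * η := by
    by_contra hc
    nlinarith
  refine ⟨g, 1 - C * η, hr, fun x y => ?_⟩
  have h := hg x y
  rw [e1, e2] at h
  refine ⟨h.1, h.2.trans ?_⟩
  refine mul_le_mul_of_nonneg_right ?_ dist_nonneg
  have : 1 + η ≤ (1 - C * η) * (1 + ε) := by linarith
  nlinarith
end

section
/- Let 1 ≤ p < ∞. For every ε > 0 and every C ≥ 1, if A is a locally finite metric space all of whose finite subsets admit C-bilipschitz embeddings into ℓ_p, then A admits a ((1+ε)·C)-bilipschitz embedding into ℓ_p. -/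
open scoped ENNReal

theorem aux_toReal_pos (p : ℝ≥0∞) [Fact (1 ≤ p)] (hp : p ≠ ∞) : 0 < p.toReal :=
  ENNReal.toReal_pos (lt_of_lt_of_le one_pos (Fact.out : 1 ≤ p)).ne' hp

theorem aux_mem {E : Type*} [NormedAddCommGroup E] (p : ℝ≥0∞) [Fact (1 ≤ p)] (hp : p ≠ ∞)
    (a : lp (fun _ : ℕ => ℝ) p) (u : ℕ → E) (K : ℝ) (h : ∀ n, ‖u n‖ ≤ K * ‖a n‖) :
    Memℓp u p := by
  have hp0 := aux_toReal_pos p hp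
  apply memℓp_gen
  have ha := ((lp.memℓp a).summable hp0).mul_left (|K| ^ p.toReal)
  refine Summable.of_nonneg_of_le (fun n => by positivity) (fun n => ?_) ha
  rw [← Real.mul_rpow (abs_nonneg _) (norm_nonneg _)]
  refine Real.rpow_le_rpow (norm_nonneg _) ((h n).trans ?_) hp0.le
  exact mul_le_mul_of_nonneg_right (le_abs_self K) (norm_nonneg _)

theorem aux_le {E F : Type*} [NormedAddCommGroup E] [NormedAddCommGroup F]
    (p : ℝ≥0∞) [Fact (1 ≤ p)] (hp : p ≠ ∞)
    (a : lp (fun _ : ℕ => E) p) (u : lp (fun _ : ℕ => F) p) (h : ∀ n, ‖u n‖ ≤ ‖a n‖) :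
    ‖u‖ ≤ ‖a‖ := by
  have hp0 := aux_toReal_pos p hp
  rw [← Real.rpow_le_rpow_iff (norm_nonneg _) (norm_nonneg _) hp0,
    lp.norm_rpow_eq_tsum hp0, lp.norm_rpow_eq_tsum hp0]
  exact Summable.tsum_le_tsum (fun n => Real.rpow_le_rpow (norm_nonneg _) (h n) hp0.le)
    ((lp.memℓp u).summable hp0) ((lp.memℓp a).summable hp0)

theorem aux_iso (p : ℝ≥0∞) [Fact (1 ≤ p)] (hp : p ≠ ∞) :
    ∃ Φ : lp (fun _ : ℕ => lp (fun _ : ℕ => ℝ) p) p → lp (fun _ : ℕ => ℝ) p,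
      ∀ u v, dist (Φ u) (Φ v) = dist u v := by
  have hp0 := aux_toReal_pos p hp
  have key : ∀ u : lp (fun _ : ℕ => lp (fun _ : ℕ => ℝ) p) p,
      Summable (fun q : ℕ × ℕ => ‖u q.1 q.2‖ ^ p.toReal) := by
    intro u
    rw [summable_prod_of_nonneg (fun q => by positivity)]
    refine ⟨fun n => (lp.memℓp (u n)).summable hp0, ?_⟩
    have := (lp.memℓp u).summable hp0
    simpa only [lp.norm_rpow_eq_tsum hp0] using this
  have mem : ∀ u : lp (fun _ : ℕ => lp (fun _ : ℕ => ℝ) p) p,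
      Memℓp (fun k : ℕ => u k.unpair.1 k.unpair.2) p := by
    intro u
    apply memℓp_gen
    exact (Nat.pairEquiv.symm.summable_iff (f := fun q : ℕ × ℕ => ‖u q.1 q.2‖ ^ p.toReal)).2 (key u)
  refine ⟨fun u => ⟨fun k : ℕ => u k.unpair.1 k.unpair.2, mem u⟩, fun u v => ?_⟩
  rw [dist_eq_norm, dist_eq_norm,
    ← Real.rpow_left_inj (norm_nonneg _) (norm_nonneg _) hp0.ne',
    lp.norm_rpow_eq_tsum hp0, lp.norm_rpow_eq_tsum hp0]
  have h1 : ∀ n, ‖(u - v) n‖ ^ p.toReal = ∑' m, ‖(u - v) n m‖ ^ p.toReal :=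
    fun n => lp.norm_rpow_eq_tsum hp0 _
  simp_rw [h1]
  rw [← (key (u - v)).tsum_prod, ← Nat.pairEquiv.symm.tsum_eq]
  rfl

theorem aux_supp (p : ℝ≥0∞) [Fact (1 ≤ p)] (hp : p ≠ ∞)
    (v : lp (fun _ : ℕ => ℝ) p) (s : Finset ℕ) (H : ℝ) (h0 : ∀ n, n ∉ s → v n = 0)
    (h : ∀ n, ‖v n‖ ≤ H) : ‖v‖ ≤ s.card * H := by
  have hv : v = ∑ i ∈ s, lp.single (E := fun _ : ℕ => ℝ) p i (v i) := by
    ext n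
    rw [lp.coeFn_sum, Finset.sum_apply]
    by_cases hn : n ∈ s
    · rw [Finset.sum_eq_single n]
      · simp
      · intro b _ hb
        simp [lp.single_apply, hb.symm]
      · simp [hn]
    · rw [h0 n hn, Finset.sum_eq_zero]
      intro b hb
      have : n ≠ b := fun e => hn (e ▸ hb)
      simp [lp.single_apply, this]
  have hp' : 0 < p := lt_of_lt_of_le one_pos (Fact.out : 1 ≤ p)
  have h1 : ‖∑ i ∈ s, lp.single (E := fun _ : ℕ => ℝ) p i (v i)‖ ≤ ∑ i ∈ s, H := by
    refine norm_sum_le_of_le s fun i _ => ?_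
    rw [lp.norm_single hp']
    exact h i
  rw [Finset.sum_const, nsmul_eq_mul] at h1
  exact (congrArg norm hv).le.trans h1

/-- tent function -/
noncomputable def auxTent (t : ℝ) (n : ℕ) : ℝ := max 0 (1 - |t - n|)

theorem auxTent_zero (t : ℝ) (n : ℕ) (ht : 0 ≤ t) (h1 : n ≠ ⌊t⌋₊) (h2 : n ≠ ⌊t⌋₊ + 1) :
    auxTent t n = 0 := by
  have ha := Nat.floor_le ht
  have hb := Nat.lt_floor_add_one t
  unfold auxTent
  apply max_eq_left
  rcases lt_or_ge n ⌊t⌋₊ with h | h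
  · have : (n : ℝ) + 1 ≤ ⌊t⌋₊ := by exact_mod_cast h
    have := le_abs_self (t - n)
    linarith
  · have : ⌊t⌋₊ + 2 ≤ n := by omega
    have : (⌊t⌋₊ : ℝ) + 2 ≤ n := by exact_mod_cast this
    have := neg_abs_le (t - n)
    linarith

theorem auxTent_lip (s t : ℝ) (n : ℕ) : |auxTent s n - auxTent t n| ≤ |s - t| := by
  unfold auxTent
  refine (abs_max_sub_max_le_max _ _ _ _).trans ?_
  have h : |(1 - |s - n|) - (1 - |t - n|)| ≤ |s - t| := by
    have := abs_abs_sub_abs_le_abs_sub (t - n) (s - n)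
    rw [show (1 - |s - n|) - (1 - |t - n|) = |t - n| - |s - n| by ring]
    refine this.trans (le_of_eq ?_)
    rw [abs_sub_comm]; congr 1; ring
  simpa using h

theorem aux_path (p : ℝ≥0∞) [Fact (1 ≤ p)] (hp : p ≠ ∞) :
    ∃ a : ℝ → lp (fun _ : ℕ => ℝ) p, (∀ t, 0 ≤ t → ‖a t‖ = 1) ∧
      (∀ s t, 0 ≤ s → 0 ≤ t → ‖a s - a t‖ ≤ 16 * |s - t|) ∧
      (∀ t, 0 ≤ t → ∀ n : ℕ, a t n ≠ 0 → t < n + 1) := by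
  have hp0 := aux_toReal_pos p hp
  have hp1 : p ≠ 0 := (lt_of_lt_of_le one_pos (Fact.out : 1 ≤ p)).ne'
  have mem : ∀ t, Memℓp (fun n => auxTent (max 0 t) n) p := by
    intro t
    apply memℓp_gen
    apply summable_of_ne_finset_zero (s := {⌊max 0 t⌋₊, ⌊max 0 t⌋₊ + 1})
    intro n hn
    simp only [Finset.mem_insert, Finset.mem_singleton, not_or] at hn
    rw [auxTent_zero _ _ (le_max_left _ _) hn.1 hn.2, norm_zero, Real.zero_rpow hp0.ne']
  let b : ℝ → lp (fun _ : ℕ => ℝ) p := fun t => ⟨_, mem t⟩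
  have hb : ∀ t, 0 ≤ t → ∀ n, b t n = auxTent t n := by
    intro t ht n
    show auxTent (max 0 t) n = _
    rw [max_eq_right ht]
  have hlip : ∀ s t, 0 ≤ s → 0 ≤ t → ‖b s - b t‖ ≤ 4 * |s - t| := by
    intro s t hs ht
    refine (aux_supp p hp (b s - b t) {⌊s⌋₊, ⌊s⌋₊ + 1, ⌊t⌋₊, ⌊t⌋₊ + 1} |s - t| ?_ ?_).trans ?_
    · intro n hn
      simp only [Finset.mem_insert, Finset.mem_singleton, not_or] at hn
      rw [lp.coeFn_sub, Pi.sub_apply, hb s hs, hb t ht, auxTent_zero _ _ hs hn.1 hn.2.1,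
        auxTent_zero _ _ ht hn.2.2.1 hn.2.2.2, sub_zero]
    · intro n
      rw [lp.coeFn_sub, Pi.sub_apply, hb s hs, hb t ht]
      exact auxTent_lip s t n
    · refine mul_le_mul_of_nonneg_right ?_ (abs_nonneg _)
      exact_mod_cast Finset.card_le_four
  have hlow : ∀ t, 0 ≤ t → 1 / 2 ≤ ‖b t‖ := by
    intro t ht
    have ha := Nat.floor_le ht
    have hb' := Nat.lt_floor_add_one t
    rcases le_total (t - ⌊t⌋₊) (1 / 2) with h | h
    · refine le_trans ?_ (lp.norm_apply_le_norm hp1 (b t) ⌊t⌋₊)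
      rw [hb t ht]
      refine le_trans ?_ (le_abs_self _)
      refine le_trans ?_ (le_max_right _ _)
      rw [abs_of_nonneg (by linarith)]; linarith
    · refine le_trans ?_ (lp.norm_apply_le_norm hp1 (b t) (⌊t⌋₊ + 1))
      rw [hb t ht]
      refine le_trans ?_ (le_abs_self _)
      refine le_trans ?_ (le_max_right _ _)
      push_cast
      rw [abs_of_nonpos (by linarith)]; linarith
  refine ⟨fun t => ‖b t‖⁻¹ • b t, ?_, ?_, ?_⟩
  · intro t ht
    have := hlow t ht
    rw [norm_smul, norm_inv, norm_norm, inv_mul_cancel₀ (by linarith)]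
  · intro s t hs ht
    have h1 := hlow s hs
    have h2 := hlow t ht
    have h3 := hlip s t hs ht
    have hs0 : 0 < ‖b s‖ := by linarith
    have ht0 : 0 < ‖b t‖ := by linarith
    have e : ‖b s‖⁻¹ • b s - ‖b t‖⁻¹ • b t =
        ‖b s‖⁻¹ • ((b s - b t) + ((‖b t‖ - ‖b s‖) * ‖b t‖⁻¹) • b t) := by
      have : ‖b s‖⁻¹ * ((‖b t‖ - ‖b s‖) * ‖b t‖⁻¹) = ‖b s‖⁻¹ - ‖b t‖⁻¹ := by
        field_simp
      rw [smul_add, smul_smul, this, smul_sub, sub_smul]; abel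
    have h4 : ‖((‖b t‖ - ‖b s‖) * ‖b t‖⁻¹) • b t‖ ≤ 4 * |s - t| := by
      rw [norm_smul, norm_mul, norm_inv, norm_norm, mul_assoc, inv_mul_cancel₀ ht0.ne', mul_one]
      refine le_trans ?_ h3
      rw [norm_sub_rev]
      exact abs_norm_sub_norm_le _ _
    have h5 : ‖b s‖⁻¹ ≤ 2 := by
      rw [inv_le_comm₀ hs0 two_pos]; linarith
    show ‖‖b s‖⁻¹ • b s - ‖b t‖⁻¹ • b t‖ ≤ _
    rw [e, norm_smul, norm_inv, norm_norm]
    have h6 := norm_add_le (b s - b t) (((‖b t‖ - ‖b s‖) * ‖b t‖⁻¹) • b t)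
    calc _ ≤ 2 * (4 * |s - t| + 4 * |s - t|) :=
          mul_le_mul h5 (by linarith) (norm_nonneg _) two_pos.le
      _ = 16 * |s - t| := by ring
  · intro t ht n hn
    by_contra hlt
    push Not at hlt
    apply hn
    have : b t n = 0 := by
      rw [hb t ht]
      unfold auxTent
      apply max_eq_left
      have := le_abs_self (t - n)
      linarith
    show ‖b t‖⁻¹ • b t n = 0
    rw [this, smul_zero]

theorem aux_log (s t : ℝ) (hs : 0 ≤ s) (hst : s ≤ t) :
    s * |Real.log (1 + t) - Real.log (1 + s)| ≤ t - s := by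
  have h1 : 0 < 1 + s := by linarith
  have h2 : 0 < 1 + t := by linarith
  rw [← Real.log_div h2.ne' h1.ne', abs_of_nonneg (Real.log_nonneg (by rw [le_div_iff₀ h1]; linarith))]
  have h := Real.log_le_sub_one_of_pos (div_pos h2 h1)
  have h3 : (1 + t) / (1 + s) - 1 = (t - s) / (1 + s) := by field_simp; ring
  rw [h3] at h
  calc _ ≤ s * ((t - s) / (1 + s)) := mul_le_mul_of_nonneg_left h hs
    _ = (s / (1 + s)) * (t - s) := by ring
    _ ≤ 1 * (t - s) := mul_le_mul_of_nonneg_right (by rw [div_le_one h1]; linarith) (by linarith)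
    _ = t - s := one_mul _

theorem aux_fin (p : ℝ≥0∞) [Fact (1 ≤ p)] (C : ℝ)
    (A : Type*) [MetricSpace A] (O : A) (S : Set A) (hC : 1 ≤ C) (hO : O ∈ S)
    (h : ∃ f : S → lp (fun _ : ℕ => ℝ) p, IsBilipschitzEmbedding C f) :
    ∃ g : A → lp (fun _ : ℕ => ℝ) p, (∀ x, ‖g x‖ ≤ C * dist x O) ∧
      ∀ x ∈ S, ∀ y ∈ S, dist x y ≤ ‖g x - g y‖ ∧ ‖g x - g y‖ ≤ C * dist x y := by
  classical
  obtain ⟨f, r, hr, hf⟩ := h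
  let g : A → lp (fun _ : ℕ => ℝ) p := fun x =>
    if hx : x ∈ S then r⁻¹ • (f ⟨x, hx⟩ - f ⟨O, hO⟩) else 0
  have hg : ∀ x (hx : x ∈ S), g x = r⁻¹ • (f ⟨x, hx⟩ - f ⟨O, hO⟩) := fun x hx => dif_pos hx
  have hgO : g O = 0 := by rw [hg O hO, sub_self, smul_zero]
  have key : ∀ x ∈ S, ∀ y ∈ S, dist x y ≤ ‖g x - g y‖ ∧ ‖g x - g y‖ ≤ C * dist x y := by
    intro x hx y hy
    have e : ‖g x - g y‖ = r⁻¹ * dist (f ⟨x, hx⟩) (f ⟨y, hy⟩) := by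
      rw [hg x hx, hg y hy, ← smul_sub, sub_sub_sub_cancel_right, norm_smul, dist_eq_norm,
        Real.norm_of_nonneg (inv_pos.2 hr).le]
    obtain ⟨h1, h2⟩ := hf ⟨x, hx⟩ ⟨y, hy⟩
    rw [Subtype.dist_eq] at h1 h2
    rw [e, inv_mul_eq_div, le_div_iff₀ hr, div_le_iff₀ hr]
    constructor <;> nlinarith
  refine ⟨g, fun x => ?_, key⟩
  by_cases hx : x ∈ S
  · have := (key x hx O hO).2
    rwa [hgO, sub_zero] at this
  · have : g x = 0 := dif_neg hx
    rw [this, norm_zero]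
    have := dist_nonneg (x := x) (y := O)
    positivity

theorem ellp_finite_determination
    (p : ℝ≥0∞) [Fact (1 ≤ p)] (hp : p ≠ ∞)
    (ε C : ℝ) (hε : 0 < ε) (hC : 1 ≤ C)
    (A : Type*) [MetricSpace A] (hA : MetricLocallyFinite A)
    (hfin : ∀ S : Set A, S.Finite →
      ∃ f : S → lp (fun _ : ℕ => ℝ) p, IsBilipschitzEmbedding C f) :
    ∃ f : A → lp (fun _ : ℕ => ℝ) p, IsBilipschitzEmbedding ((1 + ε) * C) f := by
  rcases isEmpty_or_nonempty A with hE | ⟨⟨O⟩⟩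
  · exact ⟨fun _ => 0, 1, one_pos, fun u => (hE.false u).elim⟩
  have hC0 : 0 < C := by linarith
  have hD : 0 < 1 + C * (1 + ε) := by positivity
  obtain ⟨δ, hδ⟩ : ∃ δ, δ = ε / (1 + C * (1 + ε)) := ⟨_, rfl⟩
  have hδ0 : 0 < δ := by rw [hδ]; positivity
  have hδ1 : δ * (1 + C * (1 + ε)) = ε := by rw [hδ]; field_simp
  have hr : 0 < 1 - C * δ := by
    have : 0 < (1 - C * δ) * (1 + C * (1 + ε)) := by nlinarith
    exact pos_of_mul_pos_left this hD.le
  obtain ⟨κ, hκ⟩ : ∃ κ, κ = δ / 16 := ⟨_, rfl⟩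
  have hκ0 : 0 < κ := by rw [hκ]; positivity
  obtain ⟨a, ha1, ha2, ha3⟩ := aux_path p hp
  obtain ⟨Φ, hΦ⟩ := aux_iso p hp
  have hex : ∀ n : ℕ, ∃ g : A → lp (fun _ : ℕ => ℝ) p, (∀ x, ‖g x‖ ≤ C * dist x O) ∧
      ∀ x ∈ Metric.closedBall O (Real.exp ((n + 1) / κ)),
      ∀ y ∈ Metric.closedBall O (Real.exp ((n + 1) / κ)),
        dist x y ≤ ‖g x - g y‖ ∧ ‖g x - g y‖ ≤ C * dist x y := fun n =>
    aux_fin p C A O _ hC (Metric.mem_closedBall_self (Real.exp_pos _).le) (hfin _ (hA _ _))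
  choose g hg1 hg2 using hex
  let τ : A → ℝ := fun x => κ * Real.log (1 + dist x O)
  have hτ0 : ∀ x, 0 ≤ τ x := fun x =>
    mul_nonneg hκ0.le (Real.log_nonneg (by linarith [dist_nonneg (x := x) (y := O)]))
  let α : A → lp (fun _ : ℕ => ℝ) p := fun x => a (τ x)
  have hsupp : ∀ x n, α x n ≠ 0 → dist x O ≤ Real.exp ((n + 1) / κ) := by
    intro x n h
    have h1 : κ * Real.log (1 + dist x O) < n + 1 := ha3 _ (hτ0 x) n h
    have h2 : Real.log (1 + dist x O) < (n + 1) / κ := by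
      rw [lt_div_iff₀ hκ0]; linarith
    rw [Real.log_lt_iff_lt_exp (by linarith [dist_nonneg (x := x) (y := O)])] at h2
    linarith
  let F : A → lp (fun _ : ℕ => lp (fun _ : ℕ => ℝ) p) p := fun x =>
    ⟨fun n => α x n • g n x, aux_mem p hp (α x) _ (C * dist x O) fun n => by
      rw [norm_smul, mul_comm]
      exact mul_le_mul_of_nonneg_right (hg1 n x) (norm_nonneg _)⟩
  have main : ∀ x y, dist x O ≤ dist y O →
      (1 - C * δ) * dist x y ≤ dist (F x) (F y) ∧
        dist (F x) (F y) ≤ (1 - C * δ) * ((1 + ε) * C) * dist x y := by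
    intro x y hxy
    have hb : ∀ n, dist x y * ‖α y n‖ ≤ ‖α y n • (g n x - g n y)‖ ∧
        ‖α y n • (g n x - g n y)‖ ≤ (C * dist x y) * ‖α y n‖ := by
      intro n
      by_cases h0 : α y n = 0
      · simp [h0]
      have hy := hsupp y n h0
      obtain ⟨h1, h2⟩ := hg2 n x (hxy.trans hy) y hy
      rw [norm_smul, mul_comm ‖α y n‖]
      exact ⟨mul_le_mul_of_nonneg_right h1 (norm_nonneg _),
        mul_le_mul_of_nonneg_right h2 (norm_nonneg _)⟩
    let P : lp (fun _ : ℕ => lp (fun _ : ℕ => ℝ) p) p :=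
      ⟨fun n => α y n • (g n x - g n y), aux_mem p hp (α y) _ (C * dist x y) fun n => (hb n).2⟩
    have hEb : ∀ n, ‖(α x - α y) n • g n x‖ ≤ (C * dist x O) * ‖(α x - α y) n‖ := fun n => by
      rw [norm_smul, mul_comm]
      exact mul_le_mul_of_nonneg_right (hg1 n x) (norm_nonneg _)
    let E : lp (fun _ : ℕ => lp (fun _ : ℕ => ℝ) p) p :=
      ⟨fun n => (α x - α y) n • g n x, aux_mem p hp (α x - α y) _ (C * dist x O) hEb⟩
    have hFE : F x - F y = P + E := by
      apply lp.ext
      funext n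
      show α x n • g n x - α y n • g n y =
        α y n • (g n x - g n y) + (α x n - α y n) • g n x
      rw [smul_sub, sub_smul]; abel
    have hαy : ‖α y‖ = 1 := ha1 _ (hτ0 y)
    have hd : 0 ≤ dist x y := dist_nonneg
    have hdx : 0 ≤ dist x O := dist_nonneg
    have hP1 : dist x y ≤ ‖P‖ := by
      have := aux_le p hp P (dist x y • α y) fun n => by
        have h := (hb n).1
        rw [lp.coeFn_smul, Pi.smul_apply, norm_smul, Real.norm_of_nonneg hd]
        exact h
      rwa [norm_smul, hαy, mul_one, Real.norm_of_nonneg hd] at this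
    have hP2 : ‖P‖ ≤ C * dist x y := by
      have hd' : 0 ≤ C * dist x y := by positivity
      have := aux_le p hp ((C * dist x y) • α y) P fun n => by
        have h := (hb n).2
        rw [lp.coeFn_smul, Pi.smul_apply, norm_smul (C * dist x y), Real.norm_of_nonneg hd']
        exact h
      rwa [norm_smul, hαy, mul_one, Real.norm_of_nonneg hd'] at this
    have hE1 : ‖E‖ ≤ C * δ * dist x y := by
      have hd' : 0 ≤ C * dist x O := by positivity
      have h1 := aux_le p hp ((C * dist x O) • (α x - α y)) E fun n => by
        rw [lp.coeFn_smul, Pi.smul_apply, norm_smul (C * dist x O), Real.norm_of_nonneg hd']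
        exact hEb n
      rw [norm_smul, Real.norm_of_nonneg hd'] at h1
      have h2 : ‖α x - α y‖ ≤ 16 * |τ x - τ y| := ha2 _ _ (hτ0 x) (hτ0 y)
      have h3 : |τ x - τ y| = κ * |Real.log (1 + dist y O) - Real.log (1 + dist x O)| := by
        show |κ * _ - κ * _| = _
        rw [← mul_sub, abs_mul, abs_of_pos hκ0, abs_sub_comm]
      have h4 := aux_log _ _ hdx hxy
      have h5 : dist y O - dist x O ≤ dist x y := by
        have := dist_triangle y x O
        rw [dist_comm y x] at this; linarith
      calc ‖E‖ ≤ (C * dist x O) * (16 * |τ x - τ y|) :=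
            h1.trans (mul_le_mul_of_nonneg_left h2 hd')
        _ = C * δ * (dist x O * |Real.log (1 + dist y O) - Real.log (1 + dist x O)|) := by
            rw [h3, hκ]; ring
        _ ≤ C * δ * dist x y := mul_le_mul_of_nonneg_left (h4.trans h5) (by positivity)
    rw [dist_eq_norm (F x), hFE]
    constructor
    · have h := norm_sub_le (P + E) E
      rw [add_sub_cancel_right] at h
      linarith
    · have h := norm_add_le P E
      have h6 : C + C * δ ≤ (1 - C * δ) * ((1 + ε) * C) := by
        have : 1 + δ = (1 - C * δ) * (1 + ε) := by linear_combination hδ1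
        rw [← mul_assoc, ← this]; linarith
      have := mul_le_mul_of_nonneg_right h6 hd
      linarith
  refine ⟨fun x => Φ (F x), 1 - C * δ, hr, fun u v => ?_⟩
  rw [hΦ]
  rcases le_total (dist u O) (dist v O) with h | h
  · exact main u v h
  · rw [dist_comm u v, dist_comm (F u)]
    exact main v u h
end

section
/- Let p ∈ (1,∞), p ≠ 2, and let {X_n}_{n=1}^∞ be a nested family of finite-dimensional Banach spaces such that the ℓ_p-sum X = (⊕_{n=1}^∞ X_n)_p is strictly convex. Then there exists a locally finite metric space M such that every finite subset of M admits an isometric embedding into X, yet M itself admits no isometric embedding into X. -/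
open scoped ENNReal

namespace FD
open Finset Filter Topology

noncomputable def rad (k i : ℕ) : ℝ := (-1 : ℝ) ^ (i / 2 ^ k)

noncomputable def mean (K : ℕ) (f : ℕ → ℝ) : ℝ := (∑ i ∈ range (2 ^ K), f i) / 2 ^ K

def Per (K : ℕ) (f : ℕ → ℝ) : Prop := ∀ i, f (2 ^ K + i) = f i

lemma Per.succ {K : ℕ} {f : ℕ → ℝ} (h : Per K f) : Per (K + 1) f := by
  intro i
  rw [pow_succ, mul_two, add_assoc, h, h]

lemma Per.mono {K L : ℕ} {f : ℕ → ℝ} (h : Per K f) (hKL : K ≤ L) : Per L f := by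
  induction hKL with
  | refl => exact h
  | step _ ih => exact ih.succ

lemma rad_per (k : ℕ) : Per (k + 1) (rad k) := by
  intro i
  unfold rad
  rw [pow_succ, Nat.mul_add_div (by positivity), pow_add]
  norm_num

lemma rad_shift (k i : ℕ) : rad k (2 ^ k + i) = - rad k i := by
  unfold rad
  rw [Nat.add_div_left _ (by positivity), pow_succ]
  ring

lemma rad_lt {k i : ℕ} (h : i < 2 ^ k) : rad k i = 1 := by
  unfold rad
  rw [Nat.div_eq_of_lt h, pow_zero]

lemma mean_succ (K : ℕ) (f : ℕ → ℝ) :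
    mean (K + 1) f = (mean K f + mean K (fun i => f (2 ^ K + i))) / 2 := by
  unfold mean
  rw [pow_succ, mul_two, sum_range_add]
  field_simp
  ring

lemma mean_congr {K : ℕ} {f g : ℕ → ℝ} (h : ∀ i < 2 ^ K, f i = g i) : mean K f = mean K g := by
  unfold mean
  rw [sum_congr rfl (fun i hi => h i (mem_range.1 hi))]

lemma mean_const (K : ℕ) (c : ℝ) : mean K (fun _ => c) = c := by
  unfold mean
  simp

lemma mean_of_le {K L : ℕ} {f : ℕ → ℝ} (h : Per K f) (hKL : K ≤ L) : mean L f = mean K f := by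
  induction hKL with
  | refl => rfl
  | step hh ih =>
    rw [mean_succ, mean_congr (f := fun i => f (2 ^ _ + i)) (g := f), ih]
    · ring
    · intro i _; exact h.mono hh i

lemma mean_rad1 {k K : ℕ} (hk : k < K) (h : ℝ → ℝ) :
    mean K (fun i => h (rad k i)) = (h 1 + h (-1)) / 2 := by
  have hp : Per (k + 1) (fun i => h (rad k i)) := fun i => by simp only [rad_per k i]
  rw [mean_of_le hp hk, mean_succ, mean_congr (g := fun _ => h 1),
    mean_congr (f := fun i => h (rad k (2 ^ k + i))) (g := fun _ => h (-1)), mean_const, mean_const]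
  · intro i hi; rw [rad_shift, rad_lt hi]
  · intro i hi; simp only [rad_lt hi]

lemma mean_rad2 {k l K : ℕ} (hkl : k < l) (hl : l < K) (h : ℝ → ℝ → ℝ) :
    mean K (fun i => h (rad k i) (rad l i)) =
      (h 1 1 + h (-1) 1 + h 1 (-1) + h (-1) (-1)) / 4 := by
  have hp : Per (l + 1) (fun i => h (rad k i) (rad l i)) := fun i => by
    simp only [rad_per l i, (rad_per k).mono (show k + 1 ≤ l + 1 by omega) i]
  rw [mean_of_le hp hl, mean_succ, mean_congr (g := fun i => h (rad k i) 1),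
    mean_congr (f := fun i => h (rad k (2 ^ l + i)) (rad l (2 ^ l + i)))
      (g := fun i => h (rad k i) (-1)), mean_rad1 hkl (fun t => h t 1),
      mean_rad1 hkl (fun t => h t (-1))]
  · ring
  · intro i hi; rw [rad_shift, rad_lt hi, (rad_per k).mono hkl i]
  · intro i hi; simp only [rad_lt hi]

lemma arith {q : ℝ} (h : (3 + (3 : ℝ) ^ q) / 4 = 1 + (2 : ℝ) ^ q / 2) : q = 2 := by
  have anti : StrictAnti (fun t : ℝ => (1 / 3 : ℝ) ^ t + 2 * (2 / 3 : ℝ) ^ t) := by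
    intro s t hst
    have h1 := Real.rpow_lt_rpow_of_exponent_gt (x := 1 / 3) (by norm_num) (by norm_num) hst
    have h2 := Real.rpow_lt_rpow_of_exponent_gt (x := 2 / 3) (by norm_num) (by norm_num) hst
    simp only
    linarith
  apply anti.injective
  simp only
  rw [Real.div_rpow (by norm_num) (by norm_num), Real.div_rpow (by norm_num) (by norm_num)]
  have h3 : (0 : ℝ) < 3 ^ q := by positivity
  norm_num
  field_simp
  linarith

/-- colimit metric -/
lemma exists_metric {M E : Type*} [NormedAddCommGroup E] (φ : ℕ → M → E) (lev : M → ℕ)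
    (h1 : ∀ a b K L, lev a ≤ K → lev b ≤ K → K ≤ L → ‖φ L a - φ L b‖ = ‖φ K a - φ K b‖)
    (h2 : ∀ a b K, lev a ≤ K → lev b ≤ K → φ K a = φ K b → a = b) :
    ∃ _ : MetricSpace M, ∀ a b K, lev a ≤ K → lev b ≤ K → dist a b = ‖φ K a - φ K b‖ := by
  let D : M → M → ℝ := fun a b => ‖φ (max (lev a) (lev b)) a - φ (max (lev a) (lev b)) b‖
  have hD : ∀ a b K, lev a ≤ K → lev b ≤ K → D a b = ‖φ K a - φ K b‖ := by
    intro a b K ha hb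
    exact (h1 a b _ K (le_max_left _ _) (le_max_right _ _) (max_le ha hb)).symm
  refine ⟨{ dist := D, dist_self := ?_, dist_comm := ?_, dist_triangle := ?_,
            eq_of_dist_eq_zero := ?_ }, hD⟩
  · intro a; simp [D]
  · intro a b
    change D a b = D b a
    rw [hD a b _ (le_max_left _ _) (le_max_right _ _),
      hD b a _ (le_max_right _ _) (le_max_left _ _), norm_sub_rev]
  · intro a b c
    change D a c ≤ D a b + D b c
    have ha : lev a ≤ lev a + lev b + lev c := by omega
    have hb : lev b ≤ lev a + lev b + lev c := by omega
    have hc : lev c ≤ lev a + lev b + lev c := by omega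
    rw [hD _ _ _ ha hb, hD _ _ _ ha hc, hD _ _ _ hb hc]
    exact norm_sub_le_norm_sub_add_norm_sub _ _ _
  · intro a b h
    change D a b = 0 at h
    exact h2 a b _ (le_max_left _ _) (le_max_right _ _) (sub_eq_zero.1 (norm_eq_zero.1 h))


section
variable {p : ℝ≥0∞} [Fact (1 ≤ p)] {X : ℕ → Type*} [∀ n, NormedAddCommGroup (X n)]
  [∀ n, NormedSpace ℝ (X n)]

lemma split_norm (hq : 0 < p.toReal) (s : Finset ℕ) (z y : lp X p) :
    ‖(∑ i ∈ s, lp.single p i (z i)) + (y - ∑ i ∈ s, lp.single p i (y i))‖ ^ p.toReal =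
      ‖∑ i ∈ s, lp.single p i (z i)‖ ^ p.toReal +
        ‖y - ∑ i ∈ s, lp.single p i (y i)‖ ^ p.toReal := by
  set w : lp X p := (∑ i ∈ s, lp.single p i (z i)) + (y - ∑ i ∈ s, lp.single p i (y i)) with hw
  have hwi : ∀ i ∈ s, w i = z i := by
    intro i hi
    simp only [hw, lp.coeFn_add, lp.coeFn_sub, lp.coeFn_sum, lp.coeFn_single, Pi.add_apply,
      Pi.sub_apply, Finset.sum_apply, Finset.sum_pi_single, if_pos hi, sub_self, add_zero]
  have hs : ∑ i ∈ s, lp.single p i (w i) = ∑ i ∈ s, lp.single p i (z i) :=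
    Finset.sum_congr rfl (fun i hi => by rw [hwi i hi])
  have h1 := lp.norm_compl_sum_single hq w s
  have h2 := lp.norm_sum_single hq (fun i => w i) s
  rw [hs] at h1 h2
  rw [← h2] at h1
  have h3 : w - ∑ i ∈ s, lp.single p i (z i) = y - ∑ i ∈ s, lp.single p i (y i) := by
    rw [hw]; abel
  rw [h3] at h1
  linarith

lemma exists_close [∀ n, FiniteDimensional ℝ (X n)] (s : Finset ℕ) (x : ℕ → lp X p) (C : ℝ)
    (hx : ∀ k, ‖x k‖ ≤ C) {ε : ℝ} (hε : 0 < ε) :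
    ∃ k l, k < l ∧ ‖∑ i ∈ s, lp.single p i ((x k - x l) i)‖ ≤ ε := by
  have hp0 : 0 < p := zero_lt_one.trans_le Fact.out
  have : ∀ n, ProperSpace (X n) := fun n => FiniteDimensional.proper ℝ (X n)
  let y : ℕ → (∀ i : s, X i) := fun k i => x k i
  have hC : 0 ≤ C := (norm_nonneg _).trans (hx 0)
  have hy : ∀ k, y k ∈ Metric.closedBall (0 : ∀ i : s, X i) C := by
    intro k
    rw [mem_closedBall_zero_iff, pi_norm_le_iff_of_nonneg hC]
    intro i
    exact (lp.norm_apply_le_norm hp0.ne' (x k) i).trans (hx k)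
  obtain ⟨a, -, g, hg, hlim⟩ := tendsto_subseq_of_bounded Metric.isBounded_closedBall hy
  have hc := hlim.cauchySeq
  rw [Metric.cauchySeq_iff] at hc
  obtain ⟨N, hN⟩ := hc (ε / (s.card + 1)) (by positivity)
  refine ⟨g N, g (N + 1), hg (by omega), ?_⟩
  have h := hN N le_rfl (N + 1) (by omega)
  have hi : ∀ i ∈ s, ‖lp.single (E := X) p i ((x (g N) - x (g (N + 1))) i)‖ ≤ ε / (s.card + 1) := by
    intro i hi
    rw [lp.norm_single hp0]
    have h5 := dist_le_pi_dist ((y ∘ g) N) ((y ∘ g) (N + 1)) ⟨i, hi⟩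
    rw [dist_eq_norm] at h5
    exact h5.trans h.le
  refine (norm_sum_le_of_le s hi).trans ?_
  rw [sum_const, nsmul_eq_mul, mul_div_assoc', div_le_iff₀ (by positivity)]
  nlinarith

lemma brezis_lieb [∀ n, FiniteDimensional ℝ (X n)] (hptop : p ≠ ∞)
    (z : lp X p) (x : ℕ → lp X p) (C c d : ℝ)
    (hx : ∀ k, ‖x k‖ ≤ C) (hd : ∀ k l, k < l → ‖x k - x l‖ = d)
    (hc : ∀ k l, k < l → ‖z + (x k - x l)‖ = c) :
    c ^ p.toReal = ‖z‖ ^ p.toReal + d ^ p.toReal := by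
  have hp0 : 0 < p := zero_lt_one.trans_le Fact.out
  have hq : 0 < p.toReal := ENNReal.toReal_pos hp0.ne' hptop
  have key : ∀ n : ℕ, ∃ u v y : lp X p, ‖u - z‖ ≤ 1 / ((n : ℝ) + 1) ∧ ‖v - y‖ ≤ 1 / ((n : ℝ) + 1) ∧
      ‖y‖ = d ∧ ‖z + y‖ = c ∧ ‖u + v‖ ^ p.toReal = ‖u‖ ^ p.toReal + ‖v‖ ^ p.toReal := by
    intro n
    have hε : 0 < 1 / ((n : ℝ) + 1) := by positivity
    obtain ⟨s, hs⟩ := ((Metric.tendsto_nhds.1 (lp.hasSum_single hptop z)) _ hε).exists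
    obtain ⟨k, l, hkl, h⟩ := exists_close s x C hx hε
    refine ⟨_, _, x k - x l, ?_, ?_, hd k l hkl, hc k l hkl, split_norm hq s z (x k - x l)⟩
    · rw [← dist_eq_norm]; exact hs.le
    · rw [sub_sub_cancel_left, norm_neg]; exact h
  choose u v y hu hv hyd hyc huv using key
  have hlim := tendsto_one_div_add_atTop_nhds_zero_nat (𝕜 := ℝ)
  have lu : Tendsto (fun n => ‖u n‖) atTop (𝓝 ‖z‖) := by
    rw [tendsto_iff_dist_tendsto_zero]
    refine squeeze_zero (fun _ => dist_nonneg) (fun n => ?_) hlim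
    exact (abs_norm_sub_norm_le _ _).trans (hu n)
  have lv : Tendsto (fun n => ‖v n‖) atTop (𝓝 d) := by
    rw [tendsto_iff_dist_tendsto_zero]
    refine squeeze_zero (fun _ => dist_nonneg) (fun n => ?_) hlim
    rw [← hyd n]
    exact (abs_norm_sub_norm_le _ _).trans (hv n)
  have hlim2 : Tendsto (fun n : ℕ => 1 / ((n : ℝ) + 1) + 1 / ((n : ℝ) + 1)) atTop (𝓝 0) := by
    have := hlim.add hlim
    rwa [add_zero] at this
  have luv : Tendsto (fun n => ‖u n + v n‖) atTop (𝓝 c) := by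
    rw [tendsto_iff_dist_tendsto_zero]
    refine squeeze_zero (fun _ => dist_nonneg) (fun n => ?_) hlim2
    rw [← hyc n]
    refine (abs_norm_sub_norm_le _ _).trans ?_
    rw [add_sub_add_comm]
    exact (norm_add_le _ _).trans (add_le_add (hu n) (hv n))
  have l1 := luv.rpow_const (p := p.toReal) (Or.inr hq.le)
  have l2 := (lu.rpow_const (p := p.toReal) (Or.inr hq.le)).add
    (lv.rpow_const (p := p.toReal) (Or.inr hq.le))
  exact tendsto_nhds_unique l1 (l2.congr (fun n => (huv n).symm))

lemma exists_phi (hq : 0 < p.toReal) (hX : ∀ n, Nontrivial (X (n + 1))) (K : ℕ) :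
    ∃ φ : (ℕ → ℝ) →ₗ[ℝ] lp X p, ∀ f, ‖φ f‖ ^ p.toReal = mean K (fun i => |f i| ^ p.toReal) := by
  have he : ∀ n, ∃ e : X (n + 1), ‖e‖ = 1 := fun n => exists_norm_eq (X (n + 1)) zero_le_one
  choose e he using he
  let E : ∀ n, X n := fun n => match n with
    | 0 => 0
    | n + 1 => e n
  have hE : ∀ n, ‖E (n + 1)‖ = 1 := he
  let c : ℝ := ((2 : ℝ) ^ K)⁻¹ ^ (p.toReal)⁻¹
  have hc0 : 0 ≤ c := by positivity
  have hc : c ^ p.toReal = ((2 : ℝ) ^ K)⁻¹ := Real.rpow_inv_rpow (by positivity) hq.ne'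
  refine ⟨{ toFun := fun f => ∑ n ∈ Ico 1 (2 ^ K + 1), lp.single p n ((c * f (n - 1)) • E n),
            map_add' := ?_, map_smul' := ?_ }, ?_⟩
  · intro f g
    rw [← sum_add_distrib]
    refine sum_congr rfl (fun n _ => ?_)
    rw [← lp.single_add, ← add_smul, Pi.add_apply, mul_add]
  · intro a f
    rw [smul_sum]
    refine sum_congr rfl (fun n _ => ?_)
    rw [RingHom.id_apply, ← lp.single_smul, smul_smul, Pi.smul_apply, smul_eq_mul]
    congr 2
    ring
  · intro f
    change ‖∑ n ∈ Ico 1 (2 ^ K + 1), lp.single p n ((c * f (n - 1)) • E n)‖ ^ p.toReal = _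
    rw [lp.norm_sum_single hq (fun n => (c * f (n - 1)) • E n), sum_Ico_eq_sum_range, mean,
      div_eq_mul_inv, sum_mul]
    refine sum_congr (by simp) (fun i _ => ?_)
    rw [norm_smul, add_comm 1 i, hE, mul_one, Nat.add_sub_cancel, Real.norm_eq_abs, abs_mul,
      abs_of_nonneg hc0, Real.mul_rpow hc0 (abs_nonneg _), hc, mul_comm]

end

def T : Set (ℕ → ℝ) := {f | ∃ j k a b : ℕ, k ≤ j ∧ a ≤ 1 ∧ b ≤ 1 ∧
  f = fun i => 2 ^ j * ((a : ℝ) + b * rad k i)}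

lemma T_per (f : T) : ∃ K, Per K f.1 := by
  obtain ⟨f, j, k, a, b, -, -, -, rfl⟩ := f
  exact ⟨k + 1, fun i => by simp only [rad_per k i]⟩

noncomputable def pO : T := ⟨fun i => 2 ^ 0 * (((0 : ℕ) : ℝ) + (0 : ℕ) * rad 0 i), 0, 0, 0, 0, by simp⟩
noncomputable def pU (j : ℕ) : T := ⟨fun i => 2 ^ j * (((1 : ℕ) : ℝ) + (0 : ℕ) * rad 0 i), j, 0, 1, 0, by simp⟩
noncomputable def pR (k m : ℕ) : T :=
  ⟨fun i => 2 ^ (k + m) * (((0 : ℕ) : ℝ) + (1 : ℕ) * rad k i), k + m, k, 0, 1, by simp⟩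
noncomputable def pS (k m : ℕ) : T :=
  ⟨fun i => 2 ^ (k + m) * (((1 : ℕ) : ℝ) + (1 : ℕ) * rad k i), k + m, k, 1, 1, by simp⟩

lemma Per.eq_of_lt {K : ℕ} {f g : ℕ → ℝ} (hf : Per K f) (hg : Per K g)
    (h : ∀ i < 2 ^ K, f i = g i) : f = g := by
  funext i
  have h1 : Function.Periodic f (2 ^ K) := fun i => by rw [add_comm]; exact hf i
  have h2 : Function.Periodic g (2 ^ K) := fun i => by rw [add_comm]; exact hg i
  rw [← h1.map_mod_nat i, ← h2.map_mod_nat i]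
  exact h _ (Nat.mod_lt _ (by positivity))

lemma mean_eq_zero {K : ℕ} {f : ℕ → ℝ} (h0 : ∀ i, 0 ≤ f i) (h : mean K f = 0) :
    ∀ i < 2 ^ K, f i = 0 := by
  unfold mean at h
  rw [div_eq_zero_iff, or_iff_left (by positivity), sum_eq_zero_iff_of_nonneg (fun i _ => h0 i)] at h
  exact fun i hi => h i (mem_range.2 hi)

end FD

open FD
theorem strictly_convex_lp_sum_not_isometrically_finitely_determined
    (p : ℝ≥0∞) [Fact (1 ≤ p)] (hp1 : 1 < p) (hptop : p ≠ ∞) (hp2 : p ≠ 2)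
    (X : ℕ → Type*) [∀ n, NormedAddCommGroup (X n)] [∀ n, NormedSpace ℝ (X n)]
    [∀ n, FiniteDimensional ℝ (X n)]
    (hnested : ∀ n, ∃ J : X n →ₗᵢ[ℝ] X (n + 1), ¬ Function.Surjective J)
    [StrictConvexSpace ℝ (lp X p)] :
    ∃ (M : Type) (_ : MetricSpace M), MetricLocallyFinite M ∧
      (∀ S : Set M, S.Finite → ∃ f : S → lp X p, Isometry f) ∧
      ¬ ∃ f : M → lp X p, Isometry f := by
  have hp0 : 0 < p := zero_lt_one.trans hp1
  have hq : 0 < p.toReal := ENNReal.toReal_pos hp0.ne' hptop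
  have hq1 : 1 ≤ p.toReal := by
    rw [← ENNReal.toReal_one]
    exact ENNReal.toReal_mono hptop hp1.le
  have hX : ∀ n, Nontrivial (X (n + 1)) := by
    intro n
    obtain ⟨J, hJ⟩ := hnested n
    by_contra hn
    rw [not_nontrivial_iff_subsingleton] at hn
    exact hJ (fun y => ⟨0, Subsingleton.elim _ _⟩)
  choose φ hφ using fun K => exists_phi (p := p) hq hX K
  choose lev hlev using T_per
  have hinj : ∀ {a b : ℝ}, 0 ≤ a → 0 ≤ b → a ^ p.toReal = b ^ p.toReal → a = b :=
    fun ha hb h => (Real.rpow_left_inj ha hb hq.ne').1 h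
  obtain ⟨inst, hdist⟩ := exists_metric (M := T) (fun K f => φ K f.1) lev
    (by
      intro a b K L ha hb hKL
      apply hinj (norm_nonneg _) (norm_nonneg _)
      rw [← map_sub, ← map_sub, hφ, hφ]
      refine mean_of_le (fun i => ?_) hKL
      simp only [Pi.sub_apply, (hlev a).mono ha i, (hlev b).mono hb i])
    (by
      intro a b K ha hb h
      apply Subtype.ext
      refine ((hlev a).mono ha).eq_of_lt ((hlev b).mono hb) (fun i hi => ?_)
      have h1 := hφ K (a.1 - b.1)
      rw [map_sub, sub_eq_zero.2 h, norm_zero, Real.zero_rpow hq.ne'] at h1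
      have h2 := mean_eq_zero (fun i => Real.rpow_nonneg (abs_nonneg _) _) h1.symm i hi
      rw [Real.rpow_eq_zero (abs_nonneg _) hq.ne', abs_eq_zero] at h2
      exact sub_eq_zero.1 h2)
  refine ⟨T, inst, ?_, ?_, ?_⟩
  · have hfin : ∀ R : ℝ, {f : T | dist f pO ≤ R}.Finite := by
      intro R
      obtain ⟨N, hN⟩ := exists_nat_ge R
      let G : ℕ × ℕ × ℕ × ℕ → (ℕ → ℝ) :=
        fun t i => 2 ^ t.1 * ((t.2.2.1 : ℝ) + t.2.2.2 * rad t.2.1 i)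
      have hf1 : (G '' (Set.Iic N ×ˢ Set.Iic N ×ˢ Set.Iic 1 ×ˢ Set.Iic 1)).Finite :=
        ((Set.finite_Iic N).prod ((Set.finite_Iic N).prod
          ((Set.finite_Iic 1).prod (Set.finite_Iic 1)))).image G
      refine Set.Finite.of_finite_image (f := Subtype.val) (hf1.subset ?_)
        Subtype.val_injective.injOn
      rintro _ ⟨⟨f, hfT⟩, hf, rfl⟩
      have hfT' := hfT
      obtain ⟨j, k, a, b, hkj, ha, hb, hfe⟩ := hfT'
      by_cases hab : a = 0 ∧ b = 0
      · obtain ⟨rfl, rfl⟩ := hab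
        refine ⟨(0, 0, 0, 0), by simp, ?_⟩
        simp [G, hfe]
      · have hK := hdist ⟨f, hfT⟩ pO (lev ⟨f, hfT⟩ + lev pO + k + 1) (by omega) (by omega)
        set K := lev ⟨f, hfT⟩ + lev pO + k + 1
        have hdq : (dist (⟨f, hfT⟩ : T) pO) ^ p.toReal =
            ((|2 ^ j * (a + b * 1 : ℝ)| ^ p.toReal) + (|2 ^ j * (a + b * (-1) : ℝ)| ^ p.toReal)) / 2 := by
          rw [hK, ← map_sub, hφ, ← mean_rad1 (k := k) (K := K) (by omega)
            (fun t => |2 ^ j * (a + b * t : ℝ)| ^ p.toReal)]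
          congr 1
          funext i
          simp [hfe, pO]
        have hge : ((2 : ℝ) ^ j) ^ p.toReal ≤ (dist (⟨f, hfT⟩ : T) pO) ^ p.toReal := by
          rw [hdq]
          have h2j : (0 : ℝ) ≤ 2 ^ j := by positivity
          rw [abs_mul, abs_mul, abs_of_nonneg h2j, Real.mul_rpow h2j (abs_nonneg _),
            Real.mul_rpow h2j (abs_nonneg _)]
          have hpos : 0 ≤ ((2 : ℝ) ^ j) ^ p.toReal := by positivity
          have h22 : (2 : ℝ) ≤ 2 ^ p.toReal := by
            simpa using Real.rpow_le_rpow_of_exponent_le (x := 2) (by norm_num) hq1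
          have : (2 : ℝ) ≤ |(a + b * 1 : ℝ)| ^ p.toReal + |(a + b * (-1) : ℝ)| ^ p.toReal := by
            have h00 : (0 : ℝ) ^ p.toReal = 0 := Real.zero_rpow hq.ne'
            interval_cases a <;> interval_cases b
            · exact absurd ⟨rfl, rfl⟩ hab
            all_goals norm_num
            all_goals linarith
          nlinarith
        have hge2 : (2 : ℝ) ^ j ≤ dist (⟨f, hfT⟩ : T) pO :=
          (Real.rpow_le_rpow_iff (by positivity) dist_nonneg hq).1 hge
        have hj : j ≤ N := by
          have h1 : (j : ℝ) < 2 ^ j := by exact_mod_cast Nat.lt_two_pow_self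
          have h2 : (j : ℝ) ≤ N := by
            have : dist (⟨f, hfT⟩ : T) pO ≤ R := hf
            linarith
          exact_mod_cast h2
        refine ⟨(j, k, a, b), ⟨hj, hkj.trans hj, ha, hb⟩, ?_⟩
        simp [G, hfe]
    intro x R
    refine (hfin (R + dist x pO)).subset (fun y hy => ?_)
    rw [Metric.mem_closedBall] at hy
    exact (dist_triangle y x pO).trans (by linarith)
  · intro S hS
    obtain ⟨K, hK⟩ := (hS.image lev).bddAbove
    refine ⟨fun a => φ K a.1.1, Isometry.of_dist_eq (fun a b => ?_)⟩
    rw [Subtype.dist_eq, hdist a.1 b.1 K (hK ⟨_, a.2, rfl⟩) (hK ⟨_, b.2, rfl⟩), dist_eq_norm]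
  · rintro ⟨f, hf⟩
    let g : T → lp X p := fun a => f a - f pO
    have hg : ∀ a b, dist a b = ‖g a - g b‖ := fun a b => by
      rw [← hf.dist_eq, dist_eq_norm]; simp [g]
    have hgd : ∀ a b, dist (g a) (g b) = dist a b := fun a b => by rw [hg, dist_eq_norm]
    have hmid : ∀ a b c : T, (∀ i, a.1 i + c.1 i = 2 * b.1 i) →
        g b = (1 / 2 : ℝ) • (g a + g c) := by
      intro a b c h
      have ha : lev a ≤ lev a + lev b + lev c := by omega
      have hb : lev b ≤ lev a + lev b + lev c := by omega
      have hc : lev c ≤ lev a + lev b + lev c := by omega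
      set K := lev a + lev b + lev c
      have h1 : φ K b.1 = midpoint ℝ (φ K a.1) (φ K c.1) := by
        rw [midpoint_eq_smul_add, ← map_add, ← map_smul]
        congr 1
        funext i
        have := h i
        simp only [Pi.smul_apply, Pi.add_apply, smul_eq_mul, invOf_eq_inv]
        linarith
      have h2 : g b = midpoint ℝ (g a) (g c) := by
        apply eq_midpoint_of_dist_eq_half
        · rw [hgd, hgd, hdist _ _ K ha hb, hdist _ _ K ha hc, ← dist_eq_norm, ← dist_eq_norm, h1,
            dist_left_midpoint]
          norm_num; ring
        · rw [hgd, hgd, hdist _ _ K hb hc, hdist _ _ K ha hc, ← dist_eq_norm, ← dist_eq_norm, h1,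
            dist_midpoint_right]
          norm_num; ring
      rw [h2, midpoint_eq_smul_add]
      simp
    have hO : g pO = 0 := by simp [g]
    have hU : ∀ j, g (pU j) = (2 : ℝ) ^ j • g (pU 0) := by
      intro j
      induction j with
      | zero => simp
      | succ j ih =>
        have h := hmid pO (pU j) (pU (j + 1)) (fun i => by simp [pO, pU, pow_succ]; ring)
        rw [hO, zero_add, ih] at h
        rw [pow_succ', mul_smul, h, smul_smul]
        norm_num
    have hR : ∀ k m, g (pR k m) = (2 : ℝ) ^ m • g (pR k 0) := by
      intro k m
      induction m with
      | zero => simp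
      | succ j ih =>
        have h := hmid pO (pR k j) (pR k (j + 1)) (fun i => by simp [pO, pR]; ring)
        rw [hO, zero_add, ih] at h
        rw [pow_succ', mul_smul, h, smul_smul]
        norm_num
    let z := g (pU 0)
    let x : ℕ → lp X p := fun k => ((2 : ℝ) ^ k)⁻¹ • g (pR k 0)
    have hR' : ∀ k m, g (pR k m) = (2 : ℝ) ^ (k + m) • x k := by
      intro k m
      rw [hR]
      simp only [x, smul_smul]
      congr 1
      rw [pow_add]
      field_simp
    have hS' : ∀ k m, g (pS k m) = (2 : ℝ) ^ (k + m) • (z + x k) := by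
      intro k m
      have h := hmid (pU (k + m + 1)) (pS k m) (pR k (m + 1))
        (fun i => by simp [pU, pS, pR]; ring)
      rw [h, hU, hR', smul_add, smul_add, smul_smul, smul_smul]
      congr 2 <;> ring
    -- norms
    have hz : ‖z‖ = 1 := by
      apply hinj (norm_nonneg _) zero_le_one
      have h1 : ‖z‖ = dist (pU 0) pO := by rw [hg, hO, sub_zero]
      rw [h1, hdist _ _ (lev (pU 0) + lev pO) (by omega) (by omega), ← map_sub, hφ,
        mean_congr (g := fun _ => 1), mean_const, Real.one_rpow]
      intro i _
      simp [pU, pO]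
    have hxn : ∀ k, ‖x k‖ ≤ 1 := by
      intro k
      have h1 : ‖g (pR k 0)‖ = (2 : ℝ) ^ k := by
        apply hinj (norm_nonneg _) (by positivity)
        have h1 : ‖g (pR k 0)‖ = dist (pR k 0) pO := by rw [hg, hO, sub_zero]
        rw [h1, hdist _ _ (lev (pR k 0) + lev pO) (by omega) (by omega), ← map_sub, hφ,
          mean_congr (g := fun _ => ((2 : ℝ) ^ k) ^ p.toReal), mean_const]
        intro i _
        simp [pR, pO, abs_mul, rad]
      simp only [x]
      rw [norm_smul, h1, norm_inv, norm_pow]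
      norm_num
    have hcancel : ∀ (J : ℕ) (w : lp X p) (A B : ℝ), 0 ≤ B →
        ‖(2 : ℝ) ^ J • w‖ ^ p.toReal = A → A = ((2 : ℝ) ^ J) ^ p.toReal * B →
        ‖w‖ ^ p.toReal = B := by
      intro J w A B _ h1 h2
      rw [norm_smul, Real.mul_rpow (norm_nonneg _) (norm_nonneg _), h2, norm_pow,
        Real.norm_ofNat] at h1
      exact mul_left_cancel₀ (by positivity) h1
    have hd : ∀ k l, k < l → ‖x k - x l‖ ^ p.toReal = 2 ^ p.toReal / 2 := by
      intro k l hkl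
      refine hcancel l _ _ _ (by positivity) rfl ?_
      have h1 : (2 : ℝ) ^ l • (x k - x l) = g (pR k (l - k)) - g (pR l 0) := by
        rw [hR', hR', smul_sub, Nat.add_sub_cancel' hkl.le, add_zero]
      rw [h1, ← hg, hdist _ _ (lev (pR k (l - k)) + lev (pR l 0) + l + 1) (by omega) (by omega),
        ← map_sub, hφ, mean_congr (g := fun i => (fun s t : ℝ =>
          ((2 : ℝ) ^ l) ^ p.toReal * |s - t| ^ p.toReal) (rad k i) (rad l i)),
        mean_rad2 hkl (by omega) (fun s t : ℝ => ((2 : ℝ) ^ l) ^ p.toReal * |s - t| ^ p.toReal)]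
      · norm_num [Real.zero_rpow hq.ne']; ring
      · intro i _
        simp only [← Real.mul_rpow (show (0 : ℝ) ≤ 2 ^ l by positivity) (abs_nonneg _)]
        simp [pR, Nat.add_sub_cancel' hkl.le, ← mul_sub, abs_mul]
    have hc : ∀ k l, k < l → ‖z + (x k - x l)‖ ^ p.toReal = (3 + 3 ^ p.toReal) / 4 := by
      intro k l hkl
      refine hcancel l _ _ _ (by positivity) rfl ?_
      have h1 : (2 : ℝ) ^ l • (z + (x k - x l)) = g (pS k (l - k)) - g (pR l 0) := by
        rw [hS', hR', ← add_sub_assoc, smul_sub, Nat.add_sub_cancel' hkl.le, add_zero]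
      rw [h1, ← hg, hdist _ _ (lev (pS k (l - k)) + lev (pR l 0) + l + 1) (by omega) (by omega),
        ← map_sub, hφ, mean_congr (g := fun i => (fun s t : ℝ =>
          ((2 : ℝ) ^ l) ^ p.toReal * |1 + s - t| ^ p.toReal) (rad k i) (rad l i)),
        mean_rad2 hkl (by omega) (fun s t : ℝ => ((2 : ℝ) ^ l) ^ p.toReal * |1 + s - t| ^ p.toReal)]
      · norm_num; ring
      · intro i _
        simp only [← Real.mul_rpow (show (0 : ℝ) ≤ 2 ^ l by positivity) (abs_nonneg _)]
        simp [pR, pS, Nat.add_sub_cancel' hkl.le, ← mul_sub, abs_mul]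
    have hroot : ∀ {a A : ℝ}, 0 ≤ a → a ^ p.toReal = A → a = A ^ (p.toReal)⁻¹ := by
      intro a A ha h
      rw [← h, Real.rpow_rpow_inv ha hq.ne']
    have hbl := brezis_lieb hptop z x 1 _ _ hxn
      (fun k l hkl => hroot (norm_nonneg _) (hd k l hkl))
      (fun k l hkl => hroot (norm_nonneg _) (hc k l hkl))
    rw [Real.rpow_inv_rpow (by positivity) hq.ne', Real.rpow_inv_rpow (by positivity) hq.ne', hz,
      Real.one_rpow] at hbl
    have h2 := arith hbl
    apply hp2
    rw [← ENNReal.ofReal_toReal hptop, h2]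
    simp
end

section
/- Let p ∈ (1,∞), p ≠ 2, and let {X_n}_{n=1}^∞ be a nested family of finite-dimensional strictly convex Banach spaces, with X = (⊕_{n=1}^∞ X_n)_p. Then: (i) for every ε > 0 and every C ≥ 1, every locally finite metric space all of whose finite subsets admit C-bilipschitz embeddings into X admits a ((1+ε)·C)-bilipschitz embedding into X; and (ii) there exists a locally finite metric space M whose finite subsets all admit isometric embeddings into X but which admits no isometric embedding into X. -/
open scoped ENNReal

namespace SCLP

lemma mem_of_le {p : ℝ≥0∞} [Fact (1 ≤ p)] (hptop : p ≠ ∞) {E : ℕ → Type*}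
    [∀ n, NormedAddCommGroup (E n)] (α : lp (fun _ : ℕ => ℝ) p) (c : ℝ) (g : ∀ n, E n)
    (h : ∀ i, ‖g i‖ ≤ c * ‖α i‖) : Memℓp g p := by
  have hp0 : 0 < p.toReal := ENNReal.toReal_pos (zero_lt_one.trans_le Fact.out).ne' hptop
  apply memℓp_gen
  have hs := (lp.hasSum_norm hp0 (c • α)).summable
  refine Summable.of_nonneg_of_le (fun i => by positivity) (fun i => ?_) hs
  refine Real.rpow_le_rpow (norm_nonneg _) ?_ hp0.le
  rw [lp.coeFn_smul, Pi.smul_apply, norm_smul]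
  exact (h i).trans (mul_le_mul_of_nonneg_right (le_abs_self c) (norm_nonneg _))

lemma norm_normalize_sub {V : Type*} [NormedAddCommGroup V] [NormedSpace ℝ V] (x y : V)
    (hx : 1 / 2 ≤ ‖x‖) (hy : 1 / 2 ≤ ‖y‖) :
    ‖‖x‖⁻¹ • x - ‖y‖⁻¹ • y‖ ≤ 4 * ‖x - y‖ := by
  have hx0 : 0 < ‖x‖ := by linarith
  have hy0 : 0 < ‖y‖ := by linarith
  have e : ‖x‖⁻¹ • x - ‖y‖⁻¹ • y = ‖x‖⁻¹ • (x - y) + (‖x‖⁻¹ - ‖y‖⁻¹) • y := by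
    rw [smul_sub, sub_smul]; abel
  have h1 : ‖x‖⁻¹ ≤ 2 := by
    rw [inv_le_comm₀ hx0 (by norm_num)]; linarith
  have h2 : |‖x‖⁻¹ - ‖y‖⁻¹| * ‖y‖ ≤ ‖x‖⁻¹ * ‖x - y‖ := by
    have : ‖x‖⁻¹ - ‖y‖⁻¹ = ‖x‖⁻¹ * (‖y‖ - ‖x‖) * ‖y‖⁻¹ := by field_simp
    rw [this, abs_mul, abs_mul, abs_of_pos (inv_pos.2 hx0), abs_of_pos (inv_pos.2 hy0), mul_assoc,
      inv_mul_cancel₀ hy0.ne', mul_one]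
    refine mul_le_mul_of_nonneg_left ?_ (by positivity)
    rw [norm_sub_rev]; exact abs_norm_sub_norm_le y x
  rw [e]
  refine (norm_add_le _ _).trans ?_
  rw [norm_smul, norm_smul, Real.norm_eq_abs, Real.norm_eq_abs, abs_of_pos (inv_pos.2 hx0)]
  nlinarith [norm_nonneg (x - y)]

/-- hat function -/
noncomputable def hat (s : ℝ) (i : ℕ) : ℝ := max 0 (1 - |s - i|)

lemma hat_lip (s t : ℝ) (i : ℕ) : ‖hat s i - hat t i‖ ≤ |s - t| := by
  unfold hat
  rw [Real.norm_eq_abs]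
  refine (abs_max_sub_max_le_max _ _ _ _).trans ?_
  simp only [sub_self, abs_zero]
  refine max_le (abs_nonneg _) ?_
  have : (1 - |s - i| - (1 - |t - i|)) = |t - i| - |s - i| := by ring
  rw [this]
  refine (abs_abs_sub_abs_le_abs_sub _ _).trans ?_
  rw [abs_sub_comm s t]
  apply le_of_eq; congr 1; ring

/-- the two active indices -/
noncomputable def act (s : ℝ) : Finset ℕ := {⌊s⌋₊, ⌊s⌋₊ + 1}

lemma hat_zero (s : ℝ) (hs : 0 ≤ s) (i : ℕ) (hi : i ∉ act s) : hat s i = 0 := by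
  unfold hat
  apply max_eq_left
  simp only [act, Finset.mem_insert, Finset.mem_singleton, not_or] at hi
  have h1 := Nat.floor_le hs
  have h2 := Nat.lt_floor_add_one s
  rcases lt_or_gt_of_ne hi.1 with h | h
  · have : (i : ℝ) + 1 ≤ ⌊s⌋₊ := by exact_mod_cast h
    have := le_abs_self (s - i); linarith
  · have : ⌊s⌋₊ + 2 ≤ i := by omega
    have : (⌊s⌋₊ : ℝ) + 2 ≤ i := by exact_mod_cast this
    have := neg_le_abs (s - i); linarith

lemma exists_path {p : ℝ≥0∞} [Fact (1 ≤ p)] :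
    ∃ a : ℝ → lp (fun _ : ℕ => ℝ) p, (∀ s, 0 ≤ s → ‖a s‖ = 1) ∧
      (∀ s t, 0 ≤ s → 0 ≤ t → ‖a s - a t‖ ≤ 16 * |s - t|) ∧
      ∀ s (i : ℕ), (i : ℝ) + 1 ≤ s → a s i = 0 := by
  have hp0 : 0 < p := zero_lt_one.trans_le Fact.out
  let b : ℝ → lp (fun _ : ℕ => ℝ) p := fun s => ∑ i ∈ act s, lp.single p i (hat s i)
  have hb : ∀ s, 0 ≤ s → ∀ i, b s i = hat s i := by
    intro s hs i
    simp only [b, lp.coeFn_sum, Finset.sum_apply, lp.coeFn_single, Finset.sum_pi_single]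
    split_ifs with h
    · rfl
    · exact (hat_zero s hs i h).symm
  have hlow : ∀ s, 0 ≤ s → 1 / 2 ≤ ‖b s‖ := by
    intro s hs
    have h1 := Nat.floor_le hs
    have h2 := Nat.lt_floor_add_one s
    by_cases h : s ≤ ⌊s⌋₊ + 1 / 2
    · refine le_trans ?_ (lp.norm_apply_le_norm hp0.ne' (b s) ⌊s⌋₊)
      rw [hb s hs, Real.norm_eq_abs]
      refine le_trans ?_ (le_abs_self _)
      refine le_max_of_le_right ?_
      rw [abs_of_nonneg (by linarith)]; linarith
    · refine le_trans ?_ (lp.norm_apply_le_norm hp0.ne' (b s) (⌊s⌋₊ + 1))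
      rw [hb s hs, Real.norm_eq_abs]
      refine le_trans ?_ (le_abs_self _)
      refine le_max_of_le_right ?_
      push_cast
      rw [abs_of_nonpos (by linarith)]; linarith
  have hblip : ∀ s t, 0 ≤ s → 0 ≤ t → ‖b s - b t‖ ≤ 4 * |s - t| := by
    intro s t hs ht
    have e : b s - b t = ∑ i ∈ act s ∪ act t, lp.single p i (hat s i - hat t i) := by
      ext i
      rw [lp.coeFn_sub, Pi.sub_apply, hb s hs, hb t ht]
      simp only [lp.coeFn_sum, Finset.sum_apply, lp.coeFn_single, Finset.sum_pi_single]
      split_ifs with h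
      · rfl
      · rw [Finset.mem_union, not_or] at h
        rw [hat_zero s hs i h.1, hat_zero t ht i h.2, sub_self]
    rw [e]
    have hc : (act s ∪ act t).card ≤ 4 := by
      refine (Finset.card_union_le _ _).trans ?_
      have h1 : (act s).card ≤ 2 := Finset.card_le_two
      have h2 : (act t).card ≤ 2 := Finset.card_le_two
      omega
    refine (norm_sum_le_of_le (f := fun i => lp.single p i (hat s i - hat t i)) _
      (n := fun _ => |s - t|) fun i _ => ?_).trans ?_
    · rw [lp.norm_single hp0]; exact hat_lip s t i
    · rw [Finset.sum_const, nsmul_eq_mul]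
      exact mul_le_mul_of_nonneg_right (by exact_mod_cast hc) (abs_nonneg _)
  refine ⟨fun s => ‖b s‖⁻¹ • b s, fun s hs => ?_, fun s t hs ht => ?_, fun s i hi => ?_⟩
  · have := hlow s hs
    rw [norm_smul, norm_inv, norm_norm, inv_mul_cancel₀ (by linarith)]
  · have := norm_normalize_sub (b s) (b t) (hlow s hs) (hlow t ht)
    have := hblip s t hs ht
    show ‖‖b s‖⁻¹ • b s - ‖b t‖⁻¹ • b t‖ ≤ _
    linarith
  · have hs : 0 ≤ s := by have : (0 : ℝ) ≤ i := i.cast_nonneg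
                          linarith
    show (‖b s‖⁻¹ • b s) i = 0
    rw [lp.coeFn_smul, Pi.smul_apply, hb s hs]
    have : hat s i = 0 := by
      unfold hat
      apply max_eq_left
      have := le_abs_self (s - i); linarith
    rw [this, smul_zero]

end SCLP

namespace SCLP

lemma ball_maps {E A : Type*} [NormedAddCommGroup E] [NormedSpace ℝ E] [MetricSpace A] (C : ℝ)
    (hA : MetricLocallyFinite A)
    (h : ∀ S : Set A, S.Finite → ∃ f : S → E, IsBilipschitzEmbedding C f) (O : A) (R : ℝ)
    (hR : 0 ≤ R) :
    ∃ f : A → E, f O = 0 ∧ ∀ u v, dist u O ≤ R → dist v O ≤ R →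
      dist u v ≤ ‖f u - f v‖ ∧ ‖f u - f v‖ ≤ C * dist u v := by
  classical
  obtain ⟨f, r, hr, hf⟩ := h _ (hA O R)
  have hO : O ∈ Metric.closedBall O R := Metric.mem_closedBall_self hR
  let g : A → E := fun u => if hu : u ∈ Metric.closedBall O R then
    r⁻¹ • (f ⟨u, hu⟩ - f ⟨O, hO⟩) else 0
  have hg : ∀ u (hu : u ∈ Metric.closedBall O R), g u = r⁻¹ • (f ⟨u, hu⟩ - f ⟨O, hO⟩) :=
    fun u hu => dif_pos hu
  refine ⟨g, by rw [hg O hO]; simp, fun u v hu hv => ?_⟩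
  have hu' : u ∈ Metric.closedBall O R := hu
  have hv' : v ∈ Metric.closedBall O R := hv
  rw [hg u hu', hg v hv', ← smul_sub, sub_sub_sub_cancel_right, norm_smul, norm_inv,
    Real.norm_eq_abs, abs_of_pos hr, ← dist_eq_norm]
  obtain ⟨h1, h2⟩ := hf ⟨u, hu'⟩ ⟨v, hv'⟩
  have e : dist (⟨u, hu'⟩ : Metric.closedBall O R) ⟨v, hv'⟩ = dist u v := rfl
  rw [e] at h1 h2
  constructor
  · rw [inv_mul_eq_div, le_div_iff₀ hr]; linarith
  · rw [inv_mul_eq_div, div_le_iff₀ hr]; linarith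

lemma glue {p : ℝ≥0∞} [Fact (1 ≤ p)] (hptop : p ≠ ∞) {E A : Type*} [NormedAddCommGroup E]
    [NormedSpace ℝ E] [MetricSpace A] (ε C : ℝ) (hε : 0 < ε) (hC : 1 ≤ C)
    (hA : MetricLocallyFinite A)
    (h : ∀ S : Set A, S.Finite → ∃ f : S → E, IsBilipschitzEmbedding C f) :
    ∃ f : A → lp (fun _ : ℕ => E) p, IsBilipschitzEmbedding ((1 + ε) * C) f := by
  have hp0 : p ≠ 0 := (zero_lt_one.trans_le Fact.out).ne'
  rcases isEmpty_or_nonempty A with hE | ⟨⟨O⟩⟩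
  · exact ⟨fun _ => 0, 1, one_pos, fun u => (hE.false u).elim⟩
  obtain ⟨a, ha1, halip, hasupp⟩ := exists_path (p := p)
  have hD : 0 < 1 + C * (1 + ε) := by positivity
  obtain ⟨η, hη⟩ : ∃ η, η = ε / (1 + C * (1 + ε)) := ⟨_, rfl⟩
  have hη0 : 0 < η := by rw [hη]; positivity
  have hη1 : η * (1 + C * (1 + ε)) = ε := by rw [hη]; field_simp
  have hηC : η * C < 1 := by
    by_contra hcon
    push Not at hcon
    nlinarith
  let δ : ℝ := η / 16
  have hδ : 0 < δ := by positivity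
  let s : A → ℝ := fun x => δ * Real.log (1 + dist x O)
  have hs0 : ∀ x, 0 ≤ s x := fun x => mul_nonneg hδ.le (Real.log_nonneg (by linarith [dist_nonneg (x := x) (y := O)]))
  let R : ℕ → ℝ := fun i => Real.exp ((i + 1) / δ)
  have hout : ∀ x (i : ℕ), R i < dist x O → a (s x) i = 0 := by
    intro x i hx
    apply hasupp
    have h1 : R i ≤ 1 + dist x O := by linarith
    have h2 := Real.log_le_log (Real.exp_pos _) h1
    rw [Real.log_exp, div_le_iff₀ hδ] at h2
    show _ ≤ δ * _
    linarith
  choose f hfO hf using fun i => ball_maps C hA h O (R i) (Real.exp_pos _).le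
  have hfn : ∀ i y, dist y O ≤ R i → ‖f i y‖ ≤ C * dist y O := by
    intro i y hy
    have := (hf i y O hy (by simpa using (Real.exp_pos _).le)).2
    rwa [hfO, sub_zero] at this
  let φ : ∀ x : A, lp (fun _ : ℕ => E) p := fun x =>
    ⟨fun i => a (s x) i • f i x, mem_of_le hptop (a (s x)) (C * dist x O) _ (fun i => by
      rw [norm_smul]
      by_cases hx : dist x O ≤ R i
      · rw [mul_comm]
        exact mul_le_mul_of_nonneg_right (hfn i x hx) (norm_nonneg _)
      · rw [hout x i (not_le.1 hx)]; simp)⟩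
  have key : ∀ x y, dist y O ≤ dist x O → (1 - η * C) * dist x y ≤ ‖φ x - φ y‖ ∧
      ‖φ x - φ y‖ ≤ (C + η * C) * dist x y := by
    intro x y hyx
    have hal : ‖a (s x) - a (s y)‖ * dist y O ≤ η * dist x y := by
      have h1 := halip (s x) (s y) (hs0 x) (hs0 y)
      have hy0 : 0 ≤ dist y O := dist_nonneg
      have hlog : Real.log (1 + dist x O) - Real.log (1 + dist y O) ≤
          dist x y / (1 + dist y O) := by
        rw [← Real.log_div (by positivity) (by positivity)]
        refine (Real.log_le_sub_one_of_pos (by positivity)).trans ?_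
        rw [div_sub_one (by positivity)]
        gcongr
        linarith [dist_triangle x y O]
      have hmono : Real.log (1 + dist y O) ≤ Real.log (1 + dist x O) :=
        Real.log_le_log (by positivity) (by linarith)
      have h2 : |s x - s y| ≤ δ * (dist x y / (1 + dist y O)) := by
        show |δ * _ - δ * _| ≤ _
        rw [← mul_sub, abs_mul, abs_of_pos hδ, abs_of_nonneg (by linarith)]
        exact mul_le_mul_of_nonneg_left hlog hδ.le
      have h3 : dist x y / (1 + dist y O) * dist y O ≤ dist x y := by
        rw [div_mul_eq_mul_div, div_le_iff₀ (by positivity)]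
        nlinarith [dist_nonneg (x := x) (y := y)]
      calc _ ≤ (16 * (δ * (dist x y / (1 + dist y O)))) * dist y O := by gcongr; linarith
        _ = η * (dist x y / (1 + dist y O) * dist y O) := by simp only [δ]; ring
        _ ≤ _ := by gcongr
    let v : lp (fun _ : ℕ => E) p :=
      ⟨fun i => (a (s x) - a (s y)) i • f i y,
        mem_of_le hptop (a (s x) - a (s y)) (C * dist y O) _ (fun i => by
          rw [norm_smul]
          by_cases hy : dist y O ≤ R i
          · rw [mul_comm]
            exact mul_le_mul_of_nonneg_right (hfn i y hy) (norm_nonneg _)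
          · rw [lp.coeFn_sub, Pi.sub_apply, hout y i (not_le.1 hy),
              hout x i ((not_le.1 hy).trans_le hyx)]; simp)⟩
    have hv : ‖v‖ ≤ η * C * dist x y := by
      have h1 : ‖v‖ ≤ ‖(C * dist y O) • (a (s x) - a (s y))‖ := by
        refine lp.norm_mono hp0 fun i => ?_
        show ‖(a (s x) - a (s y)) i • f i y‖ ≤ _
        rw [norm_smul, lp.coeFn_smul, Pi.smul_apply, norm_smul, Real.norm_of_nonneg (r := C * dist y O) (by positivity)]
        by_cases hy : dist y O ≤ R i
        · rw [mul_comm]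
          exact mul_le_mul_of_nonneg_right (hfn i y hy) (norm_nonneg _)
        · rw [lp.coeFn_sub, Pi.sub_apply, hout y i (not_le.1 hy),
              hout x i ((not_le.1 hy).trans_le hyx)]; simp
      rw [norm_smul, Real.norm_of_nonneg (by positivity)] at h1
      nlinarith
    have hw : ∀ i, (φ x - φ y - v) i = a (s x) i • (f i x - f i y) := by
      intro i
      show a (s x) i • f i x - a (s y) i • f i y - (a (s x) i - a (s y) i) • f i y = _
      rw [sub_smul, smul_sub]; abel
    have hup : ‖φ x - φ y - v‖ ≤ C * dist x y := by
      have h1 : ‖φ x - φ y - v‖ ≤ ‖(C * dist x y) • a (s x)‖ := by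
        refine lp.norm_mono hp0 fun i => ?_
        rw [hw, norm_smul, lp.coeFn_smul, Pi.smul_apply, norm_smul, Real.norm_of_nonneg (r := C * dist x y) (by positivity)]
        by_cases hx : dist x O ≤ R i
        · rw [mul_comm]
          exact mul_le_mul_of_nonneg_right (hf i x y hx (hyx.trans hx)).2 (norm_nonneg _)
        · rw [hout x i (not_le.1 hx)]; simp
      rwa [norm_smul, Real.norm_of_nonneg (by positivity), ha1 _ (hs0 x), mul_one] at h1
    have hlo : dist x y ≤ ‖φ x - φ y - v‖ := by
      have h1 : ‖dist x y • a (s x)‖ ≤ ‖φ x - φ y - v‖ := by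
        refine lp.norm_mono hp0 fun i => ?_
        rw [hw, norm_smul, lp.coeFn_smul, Pi.smul_apply, norm_smul, Real.norm_of_nonneg (r := dist x y) (by positivity)]
        by_cases hx : dist x O ≤ R i
        · rw [mul_comm]
          exact mul_le_mul_of_nonneg_left (hf i x y hx (hyx.trans hx)).1 (norm_nonneg _)
        · rw [hout x i (not_le.1 hx)]; simp
      rwa [norm_smul, Real.norm_of_nonneg (by positivity), ha1 _ (hs0 x), mul_one] at h1
    constructor
    · have := norm_sub_le (φ x - φ y) v
      linarith
    · have := norm_add_le (φ x - φ y - v) v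
      rw [sub_add_cancel] at this
      linarith
  have hfin : C + η * C ≤ (1 - η * C) * ((1 + ε) * C) := by
    have : (1 - η * C) * ((1 + ε) * C) - (C + η * C) = C * (ε - η * (1 + C * (1 + ε))) := by ring
    rw [hη1, sub_self, mul_zero] at this
    linarith
  refine ⟨φ, 1 - η * C, by linarith, fun x y => ?_⟩
  have main : (1 - η * C) * dist x y ≤ ‖φ x - φ y‖ ∧ ‖φ x - φ y‖ ≤ (C + η * C) * dist x y := by
    rcases le_total (dist y O) (dist x O) with hh | hh
    · exact key x y hh
    · have := key y x hh
      rwa [norm_sub_rev, dist_comm] at this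
  rw [dist_eq_norm]
  exact ⟨main.1, main.2.trans (mul_le_mul_of_nonneg_right hfin dist_nonneg)⟩

lemma nested_le (X : ℕ → Type*) [∀ n, NormedAddCommGroup (X n)] [∀ n, NormedSpace ℝ (X n)]
    (hn : ∀ n, Nonempty (X n →ₗᵢ[ℝ] X (n + 1))) (n m : ℕ) (h : n ≤ m) :
    Nonempty (X n →ₗᵢ[ℝ] X m) := by
  induction m, h using Nat.le_induction with
  | base => exact ⟨LinearIsometry.id⟩
  | succ m _ ih =>
    obtain ⟨g⟩ := ih
    obtain ⟨k⟩ := hn m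
    exact ⟨k.comp g⟩

lemma absorb {p : ℝ≥0∞} [Fact (1 ≤ p)] (hptop : p ≠ ∞) (X : ℕ → Type*)
    [∀ n, NormedAddCommGroup (X n)] [∀ n, NormedSpace ℝ (X n)]
    (hn : ∀ n, Nonempty (X n →ₗᵢ[ℝ] X (n + 1))) :
    ∃ Φ : lp (fun _ : ℕ => lp X p) p → lp X p, Isometry Φ := by
  have hp0 : 0 < p.toReal := ENNReal.toReal_pos (zero_lt_one.trans_le Fact.out).ne' hptop
  have hJ : ∀ m : ℕ, Nonempty (X (Nat.unpair m).2 →ₗᵢ[ℝ] X m) := fun m =>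
    nested_le X hn _ _ (Nat.unpair_right_le m)
  let J : ∀ m : ℕ, X (Nat.unpair m).2 →ₗᵢ[ℝ] X m := fun m => (hJ m).some
  have hsum : ∀ y : lp (fun _ : ℕ => lp X p) p,
      HasSum (fun m : ℕ => ‖J m (y (Nat.unpair m).1 (Nat.unpair m).2)‖ ^ p.toReal)
        (‖y‖ ^ p.toReal) := by
    intro y
    simp only [LinearIsometry.norm_map]
    have h1 : ∀ i, HasSum (fun n => ‖y i n‖ ^ p.toReal) (‖y i‖ ^ p.toReal) :=
      fun i => lp.hasSum_norm hp0 (y i)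
    have h2 := lp.hasSum_norm hp0 y
    have h3 : Summable (fun q : ℕ × ℕ => ‖y q.1 q.2‖ ^ p.toReal) := by
      rw [summable_prod_of_nonneg (fun q => by positivity)]
      refine ⟨fun i => (h1 i).summable, ?_⟩
      simp only [fun i => (h1 i).tsum_eq]
      exact h2.summable
    have h4 : HasSum (fun q : ℕ × ℕ => ‖y q.1 q.2‖ ^ p.toReal) (‖y‖ ^ p.toReal) := by
      have := h3.hasSum.prod_fiberwise h1
      rw [← this.unique h2]
      exact h3.hasSum
    exact (Nat.pairEquiv.symm.hasSum_iff (f := fun q : ℕ × ℕ => ‖y q.1 q.2‖ ^ p.toReal)).2 h4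
  let Φ : lp (fun _ : ℕ => lp X p) p → lp X p := fun y =>
    ⟨fun m => J m (y (Nat.unpair m).1 (Nat.unpair m).2), memℓp_gen (hsum y).summable⟩
  have hΦ : ∀ y, ‖Φ y‖ = ‖y‖ := by
    intro y
    have := (lp.hasSum_norm hp0 (Φ y)).unique (hsum y)
    exact (Real.rpow_left_inj (norm_nonneg _) (norm_nonneg _) hp0.ne').1 this
  refine ⟨Φ, Isometry.of_dist_eq fun y z => ?_⟩
  rw [dist_eq_norm, dist_eq_norm, ← hΦ (y - z)]
  congr 1
  ext m
  show J m _ - J m _ = J m (_ - _)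
  rw [map_sub]

end SCLP

namespace SCLP

/-! ### strict convexity -/

lemma rpow_mid {q : ℝ} (hq : 1 < q) {V : Type*} [NormedAddCommGroup V] [NormedSpace ℝ V]
    (x y : V) : ‖(1 / 2 : ℝ) • (x + y)‖ ^ q ≤ (‖x‖ ^ q + ‖y‖ ^ q) / 2 := by
  have h1 : ‖(1 / 2 : ℝ) • (x + y)‖ ≤ (1 / 2) * ‖x‖ + (1 / 2) * ‖y‖ := by
    rw [norm_smul, Real.norm_of_nonneg (by norm_num)]
    linarith [norm_add_le x y]
  refine (Real.rpow_le_rpow (norm_nonneg _) h1 (by linarith)).trans ?_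
  have := (convexOn_rpow hq.le).2 (norm_nonneg x) (norm_nonneg y)
    (by norm_num : (0 : ℝ) ≤ 1 / 2) (by norm_num : (0 : ℝ) ≤ 1 / 2) (by norm_num)
  simp only [smul_eq_mul] at this
  linarith

lemma rpow_mid_lt {q : ℝ} (hq : 1 < q) {V : Type*} [NormedAddCommGroup V] [NormedSpace ℝ V]
    [StrictConvexSpace ℝ V] (x y : V) (hxy : x ≠ y) :
    ‖(1 / 2 : ℝ) • (x + y)‖ ^ q < (‖x‖ ^ q + ‖y‖ ^ q) / 2 := by
  by_cases hn : ‖x‖ = ‖y‖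
  · have := Real.rpow_lt_rpow (norm_nonneg _) ((norm_midpoint_lt_iff hn).2 hxy) (by linarith : 0 < q)
    rw [← hn]; linarith
  · have h1 : ‖(1 / 2 : ℝ) • (x + y)‖ ≤ (1 / 2) * ‖x‖ + (1 / 2) * ‖y‖ := by
      rw [norm_smul, Real.norm_of_nonneg (by norm_num)]
      linarith [norm_add_le x y]
    refine (Real.rpow_le_rpow (norm_nonneg _) h1 (by linarith)).trans_lt ?_
    have := (strictConvexOn_rpow hq).2 (norm_nonneg x) (norm_nonneg y) hn
      (by norm_num : (0 : ℝ) < 1 / 2) (by norm_num : (0 : ℝ) < 1 / 2) (by norm_num)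
    simp only [smul_eq_mul] at this
    linarith

lemma one_lt_toReal {p : ℝ≥0∞} (hp1 : 1 < p) (hptop : p ≠ ∞) : 1 < p.toReal := by
  have := (ENNReal.toReal_lt_toReal ENNReal.one_ne_top hptop).2 hp1
  simpa using this

lemma mid_unique {p : ℝ≥0∞} [Fact (1 ≤ p)] (hp1 : 1 < p) (hptop : p ≠ ∞) {X : ℕ → Type*}
    [∀ n, NormedAddCommGroup (X n)] [∀ n, NormedSpace ℝ (X n)] [∀ n, StrictConvexSpace ℝ (X n)]
    (a b : lp X p) (hab : ‖a‖ = ‖b‖) (h : ‖a + b‖ = 2 * ‖a‖) : a = b := by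
  have hq := one_lt_toReal hp1 hptop
  have hq0 : 0 < p.toReal := by linarith
  by_contra hne
  obtain ⟨n, hn⟩ : ∃ n, a n ≠ b n := by
    by_contra hcon
    push Not at hcon
    exact hne (lp.ext (funext hcon))
  have hA := lp.hasSum_norm hq0 a
  have hB := lp.hasSum_norm hq0 b
  have hS := lp.hasSum_norm hq0 ((1 / 2 : ℝ) • (a + b))
  have hT := (hA.add hB).div_const 2
  have hlt := hasSum_lt (i := n) (fun i => rpow_mid hq (a i) (b i))
    (rpow_mid_lt hq (a n) (b n) hn) hS hT
  rw [norm_smul, h, Real.norm_of_nonneg (by norm_num), ← hab] at hlt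
  have : (1 / 2 : ℝ) * (2 * ‖a‖) = ‖a‖ := by ring
  rw [this] at hlt
  linarith

lemma mid_image {p : ℝ≥0∞} [Fact (1 ≤ p)] (hp1 : 1 < p) (hptop : p ≠ ∞) {X : ℕ → Type*}
    [∀ n, NormedAddCommGroup (X n)] [∀ n, NormedSpace ℝ (X n)] [∀ n, StrictConvexSpace ℝ (X n)]
    {M : Type*} [MetricSpace M] (f : M → lp X p) (hf : Isometry f) (a z b : M)
    (h1 : dist a z = dist z b) (h2 : dist a b = 2 * dist a z) : f a - f z = f z - f b := by
  apply mid_unique hp1 hptop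
  · rw [← dist_eq_norm, ← dist_eq_norm, hf.dist_eq, hf.dist_eq, h1]
  · rw [sub_add_sub_cancel, ← dist_eq_norm, ← dist_eq_norm, hf.dist_eq, hf.dist_eq, h2]

/-! ### truncations -/

/-- truncation -/
noncomputable def trunc {p : ℝ≥0∞} {X : ℕ → Type*} [∀ n, NormedAddCommGroup (X n)]
    (j : ℕ) (x : lp X p) : lp X p := ∑ i ∈ Finset.range j, lp.single p i (x i)

lemma trunc_apply {p : ℝ≥0∞} {X : ℕ → Type*} [∀ n, NormedAddCommGroup (X n)]
    (j : ℕ) (x : lp X p) (i : ℕ) : trunc j x i = if i ∈ Finset.range j then x i else 0 := by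
  simp only [trunc, lp.coeFn_sum, Finset.sum_apply, lp.coeFn_single, Finset.sum_pi_single]

lemma trunc_split {p : ℝ≥0∞} [Fact (1 ≤ p)] (hptop : p ≠ ∞) {X : ℕ → Type*}
    [∀ n, NormedAddCommGroup (X n)] (j : ℕ) (x u : lp X p) :
    ‖trunc j u + (x - trunc j x)‖ ^ p.toReal
      = ‖trunc j u‖ ^ p.toReal + ‖x - trunc j x‖ ^ p.toReal := by
  have hp0 : 0 < p.toReal := ENNReal.toReal_pos (zero_lt_one.trans_le Fact.out).ne' hptop
  have hg : ∀ i, (trunc j u + (x - trunc j x)) i = if i ∈ Finset.range j then u i else x i := by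
    intro i
    show trunc j u i + (x i - trunc j x i) = _
    rw [trunc_apply, trunc_apply]
    split_ifs <;> simp
  have h := lp.norm_compl_sum_single hp0 (trunc j u + (x - trunc j x)) (Finset.range j)
  have e1 : (trunc j u + (x - trunc j x)) - ∑ i ∈ Finset.range j,
      lp.single p i ((trunc j u + (x - trunc j x)) i) = x - trunc j x := by
    have : ∑ i ∈ Finset.range j, lp.single p i ((trunc j u + (x - trunc j x)) i) = trunc j u := by
      unfold trunc
      refine Finset.sum_congr rfl fun i hi => ?_
      have := hg i
      unfold trunc at this
      rw [this, if_pos hi]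
    rw [this]; abel
  have e2 : ∑ i ∈ Finset.range j, ‖(trunc j u + (x - trunc j x)) i‖ ^ p.toReal
      = ‖trunc j u‖ ^ p.toReal := by
    have h3 := lp.norm_sum_single hp0 (fun i => u i) (Finset.range j)
    unfold trunc
    rw [h3]
    refine Finset.sum_congr rfl fun i hi => ?_
    have := hg i
    unfold trunc at this
    rw [this, if_pos hi]
  rw [e1, e2] at h
  linarith

open Filter Topology in
lemma split_limit {p : ℝ≥0∞} [Fact (1 ≤ p)] (hptop : p ≠ ∞) {X : ℕ → Type*}
    [∀ n, NormedAddCommGroup (X n)] (u : lp X p) (a b : ℝ)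
    (h : ∀ j : ℕ, ∃ x : lp X p, ‖x‖ = a ∧ ‖x + u‖ = b ∧ ‖trunc j x‖ ≤ 1 / ((j : ℝ) + 1)) :
    b ^ p.toReal = ‖u‖ ^ p.toReal + a ^ p.toReal := by
  have hp0 : 0 < p.toReal := ENNReal.toReal_pos (zero_lt_one.trans_le Fact.out).ne' hptop
  choose x hxa hxb hxt using h
  have ht : Tendsto (fun j => trunc j (x j)) atTop (𝓝 0) :=
    squeeze_zero_norm hxt tendsto_one_div_add_atTop_nhds_zero_nat
  have hu : Tendsto (fun j => trunc j u) atTop (𝓝 u) := (lp.hasSum_single hptop u).tendsto_sum_nat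
  have hsq : ∀ (y z : ℕ → lp X p) (c : ℝ), (∀ j, ‖y j‖ = c) →
      Tendsto (fun j => z j - y j) atTop (𝓝 0) → Tendsto (fun j => ‖z j‖) atTop (𝓝 c) := by
    intro y z c hy hz
    rw [tendsto_iff_norm_sub_tendsto_zero]
    refine squeeze_zero (fun _ => norm_nonneg _) (fun j => ?_) (tendsto_zero_iff_norm_tendsto_zero.1 hz)
    rw [← hy j]
    exact abs_norm_sub_norm_le _ _
  have h1 : Tendsto (fun j => ‖x j - trunc j (x j)‖) atTop (𝓝 a) := by
    refine hsq x _ a hxa ?_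
    simpa using ht.neg
  have h2 : Tendsto (fun j => ‖trunc j u + (x j - trunc j (x j))‖) atTop (𝓝 b) := by
    refine hsq (fun j => x j + u) _ b hxb ?_
    have := (hu.sub_const u).sub ht
    simp only [sub_self] at this
    refine this.congr fun j => ?_
    abel
  have h3 : Tendsto (fun j => ‖trunc j u‖) atTop (𝓝 ‖u‖) := hu.norm
  have h4 := h2.rpow_const (p := p.toReal) (Or.inr hp0.le)
  have h5 := (h3.rpow_const (p := p.toReal) (Or.inr hp0.le)).add
    (h1.rpow_const (p := p.toReal) (Or.inr hp0.le))
  refine tendsto_nhds_unique h4 (h5.congr fun j => ?_)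
  exact (trunc_split hptop j (x j) u).symm

lemma pigeon {p : ℝ≥0∞} [Fact (1 ≤ p)] {X : ℕ → Type*}
    [∀ n, NormedAddCommGroup (X n)] [∀ n, NormedSpace ℝ (X n)] [∀ n, FiniteDimensional ℝ (X n)]
    (j : ℕ) (δ : ℝ) (hδ : 0 < δ) :
    ∃ N : ℕ, ∀ w : ℕ → lp X p, (∀ k ≤ N, ‖w k‖ ≤ 1) →
      ∃ k ≤ N, ∃ l ≤ N, k ≠ l ∧ ‖trunc j (w k) - trunc j (w l)‖ ≤ δ := by
  classical
  have hp0 : p ≠ 0 := (zero_lt_one.trans_le Fact.out).ne'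
  have : ∀ n, ProperSpace (X n) := fun n => FiniteDimensional.proper ℝ (X n)
  let L : ((i : Fin j) → X i) → lp X p := fun v => ∑ i : Fin j, lp.single p (i : ℕ) (v i)
  have hL : Continuous L := by
    refine continuous_finsetSum _ fun i _ => ?_
    exact (lp.isometry_single (i : ℕ)).continuous.comp (continuous_apply i)
  have hK : IsCompact (L '' Metric.closedBall 0 1) := (isCompact_closedBall _ _).image hL
  have hw : ∀ w : lp X p, ‖w‖ ≤ 1 → trunc j w ∈ L '' Metric.closedBall 0 1 := by
    intro w hw
    refine ⟨fun i => w i, ?_, ?_⟩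
    · rw [mem_closedBall_zero_iff, pi_norm_le_iff_of_nonneg zero_le_one]
      exact fun i => (lp.norm_apply_le_norm hp0 w i).trans hw
    · simp only [L, trunc]
      rw [Finset.sum_range]
  obtain ⟨t, -, ht, hcov⟩ := Metric.finite_approx_of_totallyBounded hK.totallyBounded (δ / 2) (by positivity)
  refine ⟨ht.toFinset.card, fun w hw1 => ?_⟩
  have hc : ∀ k, k ≤ ht.toFinset.card → ∃ c ∈ t, trunc j (w k) ∈ Metric.ball c (δ / 2) := by
    intro k hk
    have := hcov (hw _ (hw1 k hk))
    simpa using this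
  choose! c hct hcb using hc
  obtain ⟨k, hk, l, hl, hkl, heq⟩ := Finset.exists_ne_map_eq_of_card_lt_of_maps_to
    (s := Finset.range (ht.toFinset.card + 1)) (t := ht.toFinset) (f := c) (by simp)
    (fun k hk => by simpa using hct k (by simpa [Nat.lt_succ_iff] using hk))
  rw [Finset.mem_range, Nat.lt_succ_iff] at hk hl
  refine ⟨k, hk, l, hl, hkl, ?_⟩
  have h1 := Metric.mem_ball.1 (hcb k hk)
  have h2 := Metric.mem_ball.1 (hcb l hl)
  rw [← heq] at h2
  rw [← dist_eq_norm]
  linarith [dist_triangle_right (trunc j (w k)) (trunc j (w l)) (c k)]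

end SCLP

namespace SCLP

/-- average over subsets -/
noncomputable def avg (T : Finset ℕ) (h : Finset ℕ → ℝ) : ℝ :=
  (2 ^ T.card : ℝ)⁻¹ * ∑ s ∈ T.powerset, h s

/-- depends only on membership of elements of `T` -/
def Dep {β : Type*} (g : Finset ℕ → β) (T : Finset ℕ) : Prop := ∀ s, g s = g (s ∩ T)

lemma Dep.mono {β : Type*} {g : Finset ℕ → β} {T U : Finset ℕ} (h : Dep g T) (hTU : T ⊆ U) :
    Dep g U := by
  intro s
  rw [h s, h (s ∩ U), Finset.inter_assoc, Finset.inter_eq_right.2 hTU]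

lemma avg_union {h : Finset ℕ → ℝ} {T : Finset ℕ} (hT : Dep h T) (U : Finset ℕ) :
    avg (T ∪ U) h = avg T h := by
  induction U using Finset.induction_on with
  | empty => simp
  | insert a U _ ih =>
    rw [← ih, Finset.union_insert]
    by_cases ha : a ∈ T ∪ U
    · rw [Finset.insert_eq_of_mem ha]
    · unfold avg
      rw [Finset.sum_powerset_insert ha, Finset.card_insert_of_notMem ha]
      have : ∑ t ∈ (T ∪ U).powerset, h (insert a t) = ∑ t ∈ (T ∪ U).powerset, h t := by
        refine Finset.sum_congr rfl fun t _ => ?_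
        rw [hT (insert a t), hT t, Finset.insert_inter_of_notMem]
        exact fun h => ha (Finset.mem_union_left _ h)
      rw [this, pow_succ]
      field_simp
      ring

lemma avg_eq {h : Finset ℕ → ℝ} {T U : Finset ℕ} (hT : Dep h T) (hU : Dep h U) :
    avg T h = avg U h := by
  rw [← avg_union hT U, Finset.union_comm, avg_union hU T]

/-- cylinder functions -/
def W (_q : ℝ) : Type := {g : Finset ℕ → ℝ // ∃ T, Dep g T}

/-- level -/
noncomputable def W.lev {q : ℝ} (g : W q) : Finset ℕ := g.2.choose

lemma W.dep {q : ℝ} (g : W q) : Dep g.1 g.lev := g.2.choose_spec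

/-- power difference -/
noncomputable def W.df {q : ℝ} (g h : W q) : Finset ℕ → ℝ := fun s => |g.1 s - h.1 s| ^ q

lemma W.dep_df {q : ℝ} (g h : W q) {T : Finset ℕ} (hg : Dep g.1 T) (hh : Dep h.1 T) :
    Dep (W.df g h) T := by
  intro s
  unfold W.df
  rw [← hg s, ← hh s]

lemma W.dep_lev {q : ℝ} (g h : W q) : Dep (W.df g h) (g.lev ∪ h.lev) :=
  W.dep_df g h (g.dep.mono Finset.subset_union_left) (h.dep.mono Finset.subset_union_right)

/-- distance -/
noncomputable def W.d {q : ℝ} (g h : W q) : ℝ := (avg (g.lev ∪ h.lev) (W.df g h)) ^ (1 / q)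

lemma W.d_eq {q : ℝ} (g h : W q) {T : Finset ℕ} (hT : Dep (W.df g h) T) :
    W.d g h = (avg T (W.df g h)) ^ (1 / q) := by
  unfold W.d
  rw [avg_eq hT (W.dep_lev g h)]

lemma avg_nonneg {T : Finset ℕ} {h : Finset ℕ → ℝ} (hh : ∀ s, 0 ≤ h s) : 0 ≤ avg T h :=
  mul_nonneg (by positivity) (Finset.sum_nonneg fun s _ => hh s)

lemma W.df_nonneg {q : ℝ} (g h : W q) (s : Finset ℕ) : 0 ≤ W.df g h s :=
  Real.rpow_nonneg (abs_nonneg _) _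

lemma W.d_tri {q : ℝ} (hq : 1 ≤ q) (g h k : W q) : W.d g k ≤ W.d g h + W.d h k := by
  set T := g.lev ∪ h.lev ∪ k.lev with hT
  have hg : Dep g.1 T := g.dep.mono (by rw [hT]; intro x; simp +contextual)
  have hh : Dep h.1 T := h.dep.mono (by rw [hT]; intro x; simp +contextual)
  have hk : Dep k.1 T := k.dep.mono (by rw [hT]; intro x; simp +contextual)
  rw [W.d_eq g k (W.dep_df g k hg hk), W.d_eq g h (W.dep_df g h hg hh),
    W.d_eq h k (W.dep_df h k hh hk)]
  unfold avg
  have hn : ∀ a b : W q, 0 ≤ ∑ s ∈ T.powerset, W.df a b s :=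
    fun a b => Finset.sum_nonneg fun s _ => W.df_nonneg a b s
  rw [Real.mul_rpow (by positivity) (hn _ _), Real.mul_rpow (by positivity) (hn _ _),
    Real.mul_rpow (by positivity) (hn _ _), ← mul_add]
  refine mul_le_mul_of_nonneg_left ?_ (by positivity)
  have := Real.Lp_add_le T.powerset (fun s => g.1 s - h.1 s) (fun s => h.1 s - k.1 s) hq
  simpa [W.df] using this

noncomputable instance {q : ℝ} [hq : Fact (1 ≤ q)] : MetricSpace (W q) where
  dist := W.d
  dist_self g := by
    have hq0 : q ≠ 0 := by linarith [hq.out]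
    show W.d g g = 0
    unfold W.d avg W.df
    simp [hq0]
  dist_comm g h := by
    show W.d g h = W.d h g
    have : W.df g h = W.df h g := by
      funext s; unfold W.df; rw [abs_sub_comm]
    unfold W.d
    rw [this, Finset.union_comm]
  dist_triangle g h k := W.d_tri hq.out g h k
  eq_of_dist_eq_zero := by
    intro g h hd
    have hq0 : q ≠ 0 := by linarith [hq.out]
    have hd : W.d g h = 0 := hd
    unfold W.d at hd
    rw [Real.rpow_eq_zero (avg_nonneg (W.df_nonneg g h)) (by simpa using hq0)] at hd
    unfold avg at hd
    have h2 : ∑ s ∈ (g.lev ∪ h.lev).powerset, W.df g h s = 0 := by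
      rcases mul_eq_zero.1 hd with h | h
      · exfalso; revert h; positivity
      · exact h
    rw [Finset.sum_eq_zero_iff_of_nonneg (fun s _ => W.df_nonneg g h s)] at h2
    apply Subtype.ext
    funext s
    have h3 := h2 (s ∩ (g.lev ∪ h.lev))
      (Finset.mem_powerset.2 Finset.inter_subset_right)
    unfold W.df at h3
    rw [Real.rpow_eq_zero (abs_nonneg _) hq0, abs_eq_zero, sub_eq_zero] at h3
    rw [g.dep.mono Finset.subset_union_left s, h.dep.mono Finset.subset_union_right s, h3]

lemma W.dist_rpow {q : ℝ} [hq : Fact (1 ≤ q)] (g h : W q) {T : Finset ℕ} (hT : Dep (W.df g h) T) :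
    dist g h ^ q = avg T (W.df g h) := by
  have hq0 : q ≠ 0 := by linarith [hq.out]
  show W.d g h ^ q = _
  rw [W.d_eq g h hT, ← Real.rpow_mul (avg_nonneg (W.df_nonneg g h)), one_div_mul_cancel hq0,
    Real.rpow_one]

lemma W.dist_of_rpow {q : ℝ} [hq : Fact (1 ≤ q)] (g h : W q) (c : ℝ) (hc : 0 ≤ c)
    (H : dist g h ^ q = c ^ q) : dist g h = c := by
  have hq0 : q ≠ 0 := by linarith [hq.out]
  exact (Real.rpow_left_inj dist_nonneg hc hq0).1 H

lemma W.dist_const {q : ℝ} [hq : Fact (1 ≤ q)] (g h : W q) (c : ℝ) (hc : 0 ≤ c)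
    (H : ∀ s, |g.1 s - h.1 s| = c) : dist g h = c := by
  apply W.dist_of_rpow _ _ _ hc
  have e : W.df g h = fun _ => c ^ q := by
    funext s; unfold W.df; rw [H]
  rw [W.dist_rpow g h (T := ∅) (by rw [e]; intro s; rfl), e]
  simp [avg]

lemma W.mid {q : ℝ} [hq : Fact (1 ≤ q)] (a z b : W q)
    (H : ∀ s, a.1 s - z.1 s = z.1 s - b.1 s) :
    dist a z = dist z b ∧ dist a b = 2 * dist a z := by
  have hq0 : q ≠ 0 := by linarith [hq.out]
  have e : W.df a z = W.df z b := by
    funext s; unfold W.df; rw [H]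
  have e2 : W.df a b = fun s => 2 ^ q * W.df a z s := by
    funext s; unfold W.df
    rw [← Real.mul_rpow (by norm_num) (abs_nonneg _)]
    congr 1
    have : a.1 s - b.1 s = 2 * (a.1 s - z.1 s) := by linarith [H s]
    rw [this, abs_mul]; norm_num
  have h1 := W.dep_lev a z
  have h2 : Dep (W.df a b) (a.lev ∪ z.lev) := by
    rw [e2]; intro s; simp only; rw [← h1 s]
  constructor
  · apply W.dist_of_rpow _ _ _ dist_nonneg
    rw [W.dist_rpow a z h1, W.dist_rpow z b (T := a.lev ∪ z.lev) (by rw [← e]; exact h1), e]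
  · apply W.dist_of_rpow _ _ _ (by positivity)
    rw [Real.mul_rpow (by norm_num) dist_nonneg, W.dist_rpow a z h1, W.dist_rpow a b h2, e2]
    unfold avg
    rw [← Finset.mul_sum]; ring

/-- finite sets of cylinder functions embed -/
lemma W.embed {p : ℝ≥0∞} [Fact (1 ≤ p)] [hq : Fact (1 ≤ p.toReal)] {X : ℕ → Type*}
    [∀ n, NormedAddCommGroup (X n)] [∀ n, NormedSpace ℝ (X n)]
    (hX : ∀ n, ∃ v : X (n + 1), v ≠ 0) (T : Finset ℕ) :
    ∃ f : W p.toReal → lp X p, ∀ g h : W p.toReal, Dep g.1 T → Dep h.1 T →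
      dist (f g) (f h) = dist g h := by
  classical
  have hq0 : 0 < p.toReal := by linarith [hq.out]
  have hv : ∀ i : ℕ, ∃ v : X i, i ≠ 0 → ‖v‖ = 1 := by
    intro i
    cases i with
    | zero => exact ⟨0, by simp⟩
    | succ n =>
      obtain ⟨v, hv⟩ := hX n
      refine ⟨‖v‖⁻¹ • v, fun _ => ?_⟩
      rw [norm_smul, norm_inv, norm_norm, inv_mul_cancel₀ (norm_ne_zero_iff.2 hv)]
  choose v hv using hv
  let idx : Finset ℕ → ℕ := fun s => Encodable.encode s + 1
  have hidx : Function.Injective idx := fun s t h => Encodable.encode_injective (by simpa [idx] using h)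
  let dec := Function.invFun idx
  have hdec : ∀ s, dec (idx s) = s := Function.leftInverse_invFun hidx
  let c : ℝ := ((2 ^ T.card : ℝ)⁻¹) ^ (1 / p.toReal)
  have hc0 : 0 ≤ c := by positivity
  have hc : c ^ p.toReal = (2 ^ T.card : ℝ)⁻¹ := by
    rw [← Real.rpow_mul (by positivity), one_div_mul_cancel hq0.ne', Real.rpow_one]
  let f : W p.toReal → lp X p := fun g =>
    ∑ i ∈ T.powerset.image idx, lp.single p i ((c * g.1 (dec i)) • v i)
  refine ⟨f, fun g h hg hh => ?_⟩
  symm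
  apply W.dist_of_rpow _ _ _ dist_nonneg
  rw [W.dist_rpow g h (W.dep_df g h hg hh), dist_eq_norm]
  have e : f g - f h = ∑ i ∈ T.powerset.image idx,
      lp.single p i ((c * (g.1 (dec i) - h.1 (dec i))) • v i) := by
    simp only [f]
    rw [← Finset.sum_sub_distrib]
    refine Finset.sum_congr rfl fun i _ => ?_
    rw [← lp.single_sub, ← sub_smul, mul_sub]
  rw [e, lp.norm_sum_single hq0 (fun i => (c * (g.1 (dec i) - h.1 (dec i))) • v i),
    Finset.sum_image (fun a _ b _ hab => hidx hab)]
  unfold avg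
  rw [Finset.mul_sum]
  refine Finset.sum_congr rfl fun s _ => ?_
  rw [hdec, norm_smul, hv _ (Nat.succ_ne_zero _), mul_one, norm_mul, Real.norm_of_nonneg hc0,
    Real.mul_rpow hc0 (norm_nonneg _), hc]
  rfl

/-! ### the space M -/

/-- Rademacher function -/
noncomputable def rad (k : ℕ) (s : Finset ℕ) : ℝ := by
  classical exact if k ∈ s then 1 else -1

lemma rad_abs (k : ℕ) (s : Finset ℕ) : |rad k s| = 1 := by
  unfold rad; split_ifs <;> simp

lemma rad_dep (k : ℕ) : Dep (rad k) {k} := by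
  intro s; unfold rad; simp

/-- the points -/
noncomputable def ptf (m k l : ℕ) (α β : ℤ) (s : Finset ℕ) : ℝ :=
  m + α / 2 * rad k s + β / 2 * rad l s

lemma ptf_dep (m k l : ℕ) (α β : ℤ) : Dep (ptf m k l α β) {k, l} := by
  intro s
  unfold ptf
  rw [(rad_dep k).mono (U := {k, l}) (by simp) s, (rad_dep l).mono (U := {k, l}) (by simp) s]

/-- the points -/
noncomputable def pt (q : ℝ) (m k l : ℕ) (α β : ℤ) : W q := ⟨ptf m k l α β, _, ptf_dep m k l α β⟩

/-- the carrier -/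
def Car (q : ℝ) : Set (W q) := {g | ∃ (m k l : ℕ) (α β : ℤ), k ≤ m ∧ l ≤ m ∧ |α| ≤ 2 ∧ |β| ≤ 2 ∧
  g = pt q m k l α β}

lemma avg_mono {T : Finset ℕ} {h k : Finset ℕ → ℝ} (hk : ∀ s, h s ≤ k s) : avg T h ≤ avg T k :=
  mul_le_mul_of_nonneg_left (Finset.sum_le_sum fun s _ => hk s) (by positivity)

lemma avg_const (T : Finset ℕ) (c : ℝ) : avg T (fun _ => c) = c := by
  unfold avg
  rw [Finset.sum_const, Finset.card_powerset, nsmul_eq_mul]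
  push_cast
  field_simp

lemma W.dist_le_const {q : ℝ} [hq : Fact (1 ≤ q)] (g h : W q) (c : ℝ) (hc : 0 ≤ c)
    (H : ∀ s, |g.1 s - h.1 s| ≤ c) : dist g h ≤ c := by
  have hq0 : 0 < q := by linarith [hq.out]
  rw [← Real.rpow_le_rpow_iff dist_nonneg hc hq0, W.dist_rpow g h (W.dep_lev g h),
    ← avg_const (g.lev ∪ h.lev) (c ^ q)]
  exact avg_mono fun s => Real.rpow_le_rpow (abs_nonneg _) (H s) hq0.le

lemma car_locfin (q : ℝ) [hq : Fact (1 ≤ q)] : MetricLocallyFinite (Car q) := by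
  intro x R
  obtain ⟨K, hK⟩ := exists_nat_ge (R + dist x.1 (pt q 0 0 0 0 0) + 2)
  have hfin : (((fun t : ℕ × ℕ × ℕ × ℤ × ℤ => pt q t.1 t.2.1 t.2.2.1 t.2.2.2.1 t.2.2.2.2) ''
      (Set.Iic K ×ˢ Set.Iic K ×ˢ Set.Iic K ×ˢ Set.Icc (-2) 2 ×ˢ Set.Icc (-2) 2))).Finite := by
    apply Set.Finite.image
    exact (Set.finite_Iic K).prod ((Set.finite_Iic K).prod ((Set.finite_Iic K).prod
      ((Set.finite_Icc _ _).prod (Set.finite_Icc _ _))))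
  refine (hfin.preimage (f := (Subtype.val : Car q → W q)) Subtype.val_injective.injOn).subset ?_
  rintro ⟨y, m, k, l, α, β, hk, hl, hα, hβ, rfl⟩ hy
  have hy' : dist (pt q m k l α β) x.1 ≤ R := hy
  have h1 : dist (pt q m k l α β) (pt q m 0 0 0 0) ≤ 2 := by
    refine W.dist_le_const _ _ _ (by norm_num) fun s => ?_
    show |(m + α / 2 * rad k s + β / 2 * rad l s) - ((m : ℝ) + ((0 : ℤ) : ℝ) / 2 * rad 0 s +
      ((0 : ℤ) : ℝ) / 2 * rad 0 s)| ≤ 2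
    have e : (m + α / 2 * rad k s + β / 2 * rad l s) - ((m : ℝ) + ((0 : ℤ) : ℝ) / 2 * rad 0 s +
      ((0 : ℤ) : ℝ) / 2 * rad 0 s) = α / 2 * rad k s + β / 2 * rad l s := by push_cast; ring
    rw [e]
    refine (abs_add_le _ _).trans ?_
    rw [abs_mul, abs_mul, rad_abs, rad_abs, abs_div, abs_div]
    have hα' : |(α : ℝ)| ≤ 2 := by exact_mod_cast hα
    have hβ' : |(β : ℝ)| ≤ 2 := by exact_mod_cast hβ
    norm_num
    linarith
  have h2 : dist (pt q m 0 0 0 0) (pt q 0 0 0 0 0) = m := by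
    refine W.dist_const _ _ _ (by positivity) fun s => ?_
    simp [pt, ptf]
  have h3 : (m : ℝ) ≤ K := by
    have t1 := dist_triangle (pt q m 0 0 0 0) (pt q m k l α β) (pt q 0 0 0 0 0)
    have t2 := dist_triangle (pt q m k l α β) x.1 (pt q 0 0 0 0 0)
    rw [dist_comm (pt q m 0 0 0 0) (pt q m k l α β)] at t1
    linarith
  have h4 : m ≤ K := by exact_mod_cast h3
  refine ⟨(m, k, l, α, β), ?_, rfl⟩
  simp only [Set.mem_prod, Set.mem_Iic, Set.mem_Icc]
  rw [abs_le] at hα hβ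
  exact ⟨h4, hk.trans h4, hl.trans h4, hα, hβ⟩

lemma dist_x {q : ℝ} [hq : Fact (1 ≤ q)] (m k l : ℕ) (hkl : k ≠ l) :
    dist (pt q m k l 1 (-1)) (pt q m 0 0 0 0) ^ q = 1 / 2 := by
  have hq0 : q ≠ 0 := by linarith [hq.out]
  have e : W.df (pt q m k l 1 (-1)) (pt q m 0 0 0 0) =
      fun s => |(1 / 2 * rad k s - 1 / 2 * rad l s)| ^ q := by
    funext s
    unfold W.df
    congr 2
    simp only [pt, ptf]; push_cast; ring
  rw [W.dist_rpow _ _ (T := {k, l}), e]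
  · unfold avg
    rw [Finset.sum_powerset_insert (by simpa using hkl), Finset.card_pair hkl,
      ← insert_empty_eq, Finset.sum_powerset_insert (by simp), Finset.sum_powerset_insert (by simp)]
    simp [rad, hkl, hkl.symm, hq0]
    norm_num [hq0]
  · rw [e]
    intro s
    simp only
    rw [(rad_dep k).mono (U := {k, l}) (by simp) s, (rad_dep l).mono (U := {k, l}) (by simp) s]

lemma dist_xu {q : ℝ} [hq : Fact (1 ≤ q)] (m k l : ℕ) (hkl : k ≠ l) :
    dist (pt q (m + 1) k l 1 (-1)) (pt q m 0 0 0 0) ^ q = 1 / 2 + 2 ^ q / 4 := by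
  have hq0 : q ≠ 0 := by linarith [hq.out]
  have e : W.df (pt q (m + 1) k l 1 (-1)) (pt q m 0 0 0 0) =
      fun s => |(1 + 1 / 2 * rad k s - 1 / 2 * rad l s)| ^ q := by
    funext s
    unfold W.df
    congr 2
    simp only [pt, ptf]; push_cast; ring
  rw [W.dist_rpow _ _ (T := {k, l}), e]
  · unfold avg
    rw [Finset.sum_powerset_insert (by simpa using hkl), Finset.card_pair hkl,
      ← insert_empty_eq, Finset.sum_powerset_insert (by simp), Finset.sum_powerset_insert (by simp)]
    simp [rad, hkl, hkl.symm]
    norm_num [hq0]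
    ring
  · rw [e]
    intro s
    simp only
    rw [(rad_dep k).mono (U := {k, l}) (by simp) s, (rad_dep l).mono (U := {k, l}) (by simp) s]

end SCLP

namespace SCLP

lemma car_mem {q : ℝ} {m k l : ℕ} {α β : ℤ} (hk : k ≤ m) (hl : l ≤ m) (hα : |α| ≤ 2)
    (hβ : |β| ≤ 2) : pt q m k l α β ∈ Car q := ⟨m, k, l, α, β, hk, hl, hα, hβ, rfl⟩

lemma car_base {q : ℝ} (m : ℕ) : pt q m 0 0 0 0 ∈ Car q :=
  car_mem (Nat.zero_le _) (Nat.zero_le _) (by norm_num) (by norm_num)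

lemma not_embed {p : ℝ≥0∞} [Fact (1 ≤ p)] [hq : Fact (1 ≤ p.toReal)] (hp1 : 1 < p)
    (hptop : p ≠ ∞) (hp2 : p ≠ 2) {X : ℕ → Type*}
    [∀ n, NormedAddCommGroup (X n)] [∀ n, NormedSpace ℝ (X n)]
    [∀ n, FiniteDimensional ℝ (X n)] [∀ n, StrictConvexSpace ℝ (X n)]
    (f : Car p.toReal → lp X p) (hf : Isometry f) : False := by
  classical
  have hq0 : 0 < p.toReal := by linarith [hq.out]
  let F : W p.toReal → lp X p := fun g => if h : g ∈ Car p.toReal then f ⟨g, h⟩ else 0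
  have hF : ∀ g (h : g ∈ Car p.toReal), F g = f ⟨g, h⟩ := fun g h => dif_pos h
  have hFd : ∀ g h, g ∈ Car p.toReal → h ∈ Car p.toReal → ‖F g - F h‖ = dist g h := by
    intro g h hg hh
    rw [hF g hg, hF h hh, ← dist_eq_norm, hf.dist_eq]
    rfl
  have hmid : ∀ a z b, a ∈ Car p.toReal → z ∈ Car p.toReal → b ∈ Car p.toReal →
      (∀ s, a.1 s - z.1 s = z.1 s - b.1 s) → F a - F z = F z - F b := by
    intro a z b ha hz hb h
    rw [hF a ha, hF z hz, hF b hb]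
    obtain ⟨h1, h2⟩ := W.mid a z b h
    exact mid_image hp1 hptop f hf ⟨a, ha⟩ ⟨z, hz⟩ ⟨b, hb⟩ h1 h2
  let c : ℕ → lp X p := fun m => F (pt _ m 0 0 0 0)
  let u := c 1 - c 0
  have hu : ∀ m, c (m + 1) - c m = u := by
    intro m
    induction m with
    | zero => rfl
    | succ m ih =>
      rw [← ih]
      refine hmid _ _ _ (car_base _) (car_base _) (car_base _) fun s => ?_
      simp only [pt, ptf]; push_cast; ring
  have hu1 : ‖u‖ = 1 := by
    refine (hFd _ _ (car_base _) (car_base _)).trans ?_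
    refine W.dist_const _ _ _ (by norm_num) fun s => ?_
    simp [pt, ptf]
  have hroot : ∀ t r : ℝ, 0 ≤ t → t ^ p.toReal = r → t = r ^ (1 / p.toReal) := by
    intro t r ht h
    rw [← h, ← Real.rpow_mul ht, mul_one_div_cancel hq0.ne', Real.rpow_one]
  have key := split_limit hptop u ((1 / 2 : ℝ) ^ (1 / p.toReal))
    ((1 / 2 + 2 ^ p.toReal / 4 : ℝ) ^ (1 / p.toReal)) (fun j => by
    have hδ : (0 : ℝ) < 2 * (1 / ((j : ℝ) + 1)) := by positivity
    obtain ⟨N, hN⟩ := pigeon (p := p) (X := X) j _ hδ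
    let w : ℕ → lp X p := fun k => F (pt _ (N + 1) k k 2 0) - c (N + 1)
    have hm2 : ∀ k, k ≤ N → pt p.toReal (N + 1) k k 2 0 ∈ Car p.toReal := fun k hk =>
      car_mem (by omega) (by omega) (by norm_num) (by norm_num)
    have hm3 : ∀ k, k ≤ N → pt p.toReal (N + 1) k k (-2) 0 ∈ Car p.toReal := fun k hk =>
      car_mem (by omega) (by omega) (by norm_num) (by norm_num)
    have hw1 : ∀ k ≤ N, ‖w k‖ = 1 := by
      intro k hk
      refine (hFd _ _ (hm2 k hk) (car_base _)).trans ?_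
      refine W.dist_const _ _ _ (by norm_num) fun s => ?_
      simp [pt, ptf, rad_abs]
    obtain ⟨k, hk, l, hl, hkl, hd⟩ := hN w (fun k hk => (hw1 k hk).le)
    have hm4 : pt p.toReal (N + 1) k l 1 (-1) ∈ Car p.toReal :=
      car_mem (by omega) (by omega) (by norm_num) (by norm_num)
    have e1 : F (pt _ (N + 1) l l 2 0) - c (N + 1) = c (N + 1) - F (pt _ (N + 1) l l (-2) 0) := by
      refine hmid _ _ _ (hm2 l hl) (car_base _) (hm3 l hl) fun s => ?_
      simp only [pt, ptf]; push_cast; ring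
    have e2 : F (pt _ (N + 1) k k 2 0) - F (pt _ (N + 1) k l 1 (-1)) =
        F (pt _ (N + 1) k l 1 (-1)) - F (pt _ (N + 1) l l (-2) 0) := by
      refine hmid _ _ _ (hm2 k hk) hm4 (hm3 l hl) fun s => ?_
      simp only [pt, ptf]; push_cast; ring
    have e3 : F (pt _ (N + 1) k l 1 (-1)) - c (N + 1) = (1 / 2 : ℝ) • (w k - w l) := by
      have : (2 : ℝ) • (F (pt _ (N + 1) k l 1 (-1)) - c (N + 1)) = w k - w l := by
        have e4 : F (pt _ (N + 1) l l (-2) 0) = c (N + 1) - w l := by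
          show _ = c (N + 1) - (F (pt _ (N + 1) l l 2 0) - c (N + 1))
          rw [e1]; abel
        have e5 : F (pt _ (N + 1) k k 2 0) = w k + c (N + 1) := by
          simp only [w]; abel
        rw [e4, e5] at e2
        rw [two_smul]
        have e6 := eq_add_of_sub_eq e2
        have e7 : w k = F (pt _ (N + 1) k l 1 (-1)) - (c (N + 1) - w l) +
          F (pt _ (N + 1) k l 1 (-1)) - c (N + 1) := eq_sub_of_add_eq e6
        rw [e7]; abel
      rw [← this, smul_smul]; norm_num
    refine ⟨F (pt _ (N + 1) k l 1 (-1)) - c (N + 1), ?_, ?_, ?_⟩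
    · apply hroot _ _ (norm_nonneg _)
      rw [hFd _ _ hm4 (car_base _)]
      exact dist_x _ _ _ hkl
    · apply hroot _ _ (norm_nonneg _)
      rw [← hu N, sub_add_sub_cancel, hFd _ _ hm4 (car_base _)]
      exact dist_xu _ _ _ hkl
    · rw [e3]
      have e8 : trunc j ((1 / 2 : ℝ) • (w k - w l)) = (1 / 2 : ℝ) • (trunc j (w k) - trunc j (w l)) := by
        ext i
        rw [trunc_apply]
        show _ = (1 / 2 : ℝ) • (trunc j (w k) i - trunc j (w l) i)
        rw [trunc_apply, trunc_apply]
        split_ifs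
        · rfl
        · simp
      rw [e8, norm_smul, Real.norm_of_nonneg (by norm_num)]
      linarith)
  rw [hu1, Real.one_rpow, ← Real.rpow_mul (by positivity), ← Real.rpow_mul (by positivity),
    one_div_mul_cancel hq0.ne', Real.rpow_one, Real.rpow_one] at key
  have h4 : (2 : ℝ) ^ p.toReal = 2 ^ (2 : ℝ) := by
    norm_num
    linarith
  have h5 : p.toReal = 2 := by
    have := congrArg (Real.logb 2) h4
    rwa [Real.logb_rpow (by norm_num) (by norm_num), Real.logb_rpow (by norm_num) (by norm_num)] at this
  apply hp2
  rw [← ENNReal.ofReal_toReal hptop, h5]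
  norm_num

end SCLP

theorem strictly_convex_lp_sum_D_eq_one_plus
    (p : ℝ≥0∞) [Fact (1 ≤ p)] (hp1 : 1 < p) (hptop : p ≠ ∞) (hp2 : p ≠ 2)
    (X : ℕ → Type*) [∀ n, NormedAddCommGroup (X n)] [∀ n, NormedSpace ℝ (X n)]
    [∀ n, FiniteDimensional ℝ (X n)] [∀ n, StrictConvexSpace ℝ (X n)]
    (hnested : ∀ n, ∃ J : X n →ₗᵢ[ℝ] X (n + 1), ¬ Function.Surjective J) :
    (∀ (ε C : ℝ), 0 < ε → 1 ≤ C →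
      ∀ (A : Type*) [MetricSpace A], MetricLocallyFinite A →
        (∀ S : Set A, S.Finite → ∃ f : S → lp X p, IsBilipschitzEmbedding C f) →
        ∃ f : A → lp X p, IsBilipschitzEmbedding ((1 + ε) * C) f) ∧
    (∃ (M : Type) (_ : MetricSpace M), MetricLocallyFinite M ∧
      (∀ S : Set M, S.Finite → ∃ f : S → lp X p, Isometry f) ∧
      ¬ ∃ f : M → lp X p, Isometry f) := by
  have hn : ∀ n, Nonempty (X n →ₗᵢ[ℝ] X (n + 1)) := fun n => ⟨(hnested n).choose⟩
  refine ⟨?_, ?_⟩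
  · intro ε C hε hC A _ hA h
    obtain ⟨φ, r, hr, hφ⟩ := SCLP.glue hptop ε C hε hC hA h
    obtain ⟨Φ, hΦ⟩ := SCLP.absorb hptop X hn
    refine ⟨fun x => Φ (φ x), r, hr, fun u v => ?_⟩
    rw [hΦ.dist_eq]
    exact hφ u v
  · haveI hq : Fact (1 ≤ p.toReal) := ⟨(SCLP.one_lt_toReal hp1 hptop).le⟩
    refine ⟨SCLP.Car p.toReal, inferInstance, SCLP.car_locfin _, fun S hS => ?_, ?_⟩
    · have hX : ∀ n, ∃ v : X (n + 1), v ≠ 0 := by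
        intro n
        obtain ⟨J, hJ⟩ := hnested n
        by_contra hcon
        push Not at hcon
        exact hJ fun v => ⟨0, by rw [map_zero, hcon v]⟩
      obtain ⟨f, hf⟩ := SCLP.W.embed (p := p) hX (hS.toFinset.biUnion fun g => g.1.lev)
      refine ⟨fun g => f g.1.1, Isometry.of_dist_eq fun g h => ?_⟩
      refine hf _ _ (g.1.1.dep.mono ?_) (h.1.1.dep.mono ?_)
      · exact Finset.subset_biUnion_of_mem (fun g : SCLP.Car p.toReal => g.1.lev)
          (hS.mem_toFinset.2 g.2)
      · exact Finset.subset_biUnion_of_mem (fun g : SCLP.Car p.toReal => g.1.lev)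
          (hS.mem_toFinset.2 h.2)
    · rintro ⟨f, hf⟩
      exact SCLP.not_embed hp1 hptop hp2 f hf
end
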